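/- Consider the second order ODE y'' = B(x,y,y') with B real-analytic in a neighborhood of 0 ∈ ℝ³. Then there exists a local diffeomorphism Φ = (φ,ψ): (x,y) ↦ (X,Y) of a neighborhood of 0 ∈ ℝ² fixing the origin, and a function B*(X,Y,P) real-analytic near 0 ∈ ℝ³, such that the transformed equation is Y'' = B*(X,Y,Y') — i.e. for every solution y(x) of y''=B(x,y,y') with graph near 0 and with (d/dx)φ(x,y(x)) ≠ 0, the function Y(X) determined by Y(φ(x,y(x))) = ψ(x,y(x)) satisfies Y''(X) = B*(X, Y(X), Y'(X)) — and the Taylor expansion B*(X,Y,P) = Σ_{i,j≥0} B_{ij}(Y) X^i P^j satisfies B_{i0} = B_{i1} = 0 for all i ≥ 0, and B_{02} = B_{03} = B_{12} = B_{13} = 0; equivalently, B* = P⁴ Σ_{j≥0} (B_{0,j+4}(Y) + X B_{1,j+4}(Y)) P^j + Σ_{i≥2, j≥2} B_{ij}(Y) X^i P^j. -/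

import Mathlib

/- Normal form for second order ODEs `y'' = B(x,y,y')` under point
   transformations. -/

open Set

/- Write `bⱼ(x, y)` for the Taylor coefficients of `B(x, y, p)` in `p`. The first four coefficients
of a transformed equation at a point depend only on the 2-jet of the transformation there and on the
Taylor coefficients of `B` at one slope, so each group of conditions turns into an analytic ordinary
differential equation for the transformation.

First a curve `x = g(y)` with directions `s(y)` along it is straightened to the axis `x = 0` with
horizontal directions. A second order system for `(g, s)`, which defines the chains of the equation,
makes `b₃ = 0` and `∂b₂/∂x = 2 ∂b₁/∂y` on the axis. Next, flattening the solutions which cross the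
axis with slope `0` removes `b₀`, and reparametrizing the resulting horizontal lines removes `b₁`.
Both transformations agree to first order with the identity along the axis, so the axis remains a
chain, and `∂b₂/∂x = 0` there because `b₁ = 0`. Finally, substitutions `(h(y) x, τ(y))` preserve all
of this, and a second order system for `(h, τ)` gives `b₂ = ∂b₃/∂x = 0` on the axis. -/

open Filter Topology

namespace SecondOrderODE

section Product

variable {E F G : Type*} [NormedAddCommGroup E] [NormedSpace ℝ E]
  [NormedAddCommGroup F] [NormedSpace ℝ F] [NormedAddCommGroup G] [NormedSpace ℝ G]
  {f : G → E × F} {p : G}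

@[fun_prop]
theorem analyticAt_fst_apply (hf : AnalyticAt ℝ f p) : AnalyticAt ℝ (fun z => (f z).1) p :=
  analyticAt_fst.comp hf

@[fun_prop]
theorem analyticAt_snd_apply (hf : AnalyticAt ℝ f p) : AnalyticAt ℝ (fun z => (f z).2) p :=
  analyticAt_snd.comp hf

end Product

section Nemytskii

variable {K E F : Type*} [TopologicalSpace K] [CompactSpace K]
  [NormedAddCommGroup E] [NormedSpace ℝ E] [NormedAddCommGroup F] [NormedSpace ℝ F]

omit [CompactSpace K] [NormedSpace ℝ E] in
theorem update_apply_apply {ι : Type*} [DecidableEq ι] (m : ι → C(K, E)) (i : ι) (z : C(K, E))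
    (s : K) : (fun j => Function.update m i z j s) = Function.update (fun j => m j s) i (z s) :=
  funext (Function.apply_update (fun _ u => u s) m i z)

/-- The multilinear map on spaces of continuous functions that applies the continuous multilinear
map `p` pointwise; the homogeneous terms of a superposition operator `u ↦ f ∘ u` are of this
form. -/
noncomputable def pointwiseMultilinear {n : ℕ} (p : E [×n]→L[ℝ] F) :
    C(K, E) [×n]→L[ℝ] C(K, F) :=
  MultilinearMap.mkContinuous
    { toFun := fun u => ⟨fun s => p (fun i => u i s), by fun_prop⟩
      map_update_add' := fun m i x y => by ext s; simp [update_apply_apply]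
      map_update_smul' := fun m i c x => by ext s; simp [update_apply_apply] }
    ‖p‖ (by
      intro m
      refine (ContinuousMap.norm_le _ (by positivity)).2 fun s =>
        (p.le_opNorm _).trans ?_
      exact mul_le_mul_of_nonneg_left (Finset.prod_le_prod (fun _ _ => norm_nonneg _)
        fun i _ => (m i).norm_coe_le_norm s) (norm_nonneg p))

theorem norm_pointwiseMultilinear_le {n : ℕ} (p : E [×n]→L[ℝ] F) :
    ‖(pointwiseMultilinear p : C(K, E) [×n]→L[ℝ] C(K, F))‖ ≤ ‖p‖ :=
  MultilinearMap.mkContinuous_norm_le _ (norm_nonneg _) _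

theorem exists_analyticAt_superposition [CompleteSpace F] {f : E → F} {e₀ : E}
    (hf : AnalyticAt ℝ f e₀) :
    ∃ N : C(K, E) → C(K, F), AnalyticAt ℝ N (.const K e₀) ∧
      ∀ᶠ u in 𝓝 (.const K e₀), ∀ s, N u s = f (u s) := by
  obtain ⟨p, r, hp⟩ := hf
  let P : FormalMultilinearSeries ℝ C(K, E) C(K, F) := fun n => pointwiseMultilinear (p n)
  have hr : r ≤ P.radius := hp.r_le.trans
    (FormalMultilinearSeries.radius_le_of_le fun _ => norm_pointwiseMultilinear_le _)
  have hP : HasFPowerSeriesOnBall (fun u => P.sum (u - .const K e₀)) P (.const K e₀) r := by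
    simpa using ((P.hasFPowerSeriesOnBall (hp.r_pos.trans_le hr)).mono hp.r_pos hr).comp_sub
      (.const K e₀)
  refine ⟨_, hP.analyticAt, ?_⟩
  filter_upwards [Metric.eball_mem_nhds _ hp.r_pos] with u hu s
  have hus : u s ∈ Metric.eball e₀ r := by
    refine lt_of_le_of_lt ?_ (Metric.mem_eball.1 hu)
    rw [edist_dist, edist_dist]
    exact ENNReal.ofReal_le_ofReal (u.dist_apply_le_dist (g := .const K e₀) s)
  exact (((hP.hasSum_sub hu).map (ContinuousMap.evalCLM ℝ s)
    (ContinuousMap.evalCLM ℝ s).continuous)).unique (hp.hasSum_sub hus)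

end Nemytskii

section Volterra

variable {E : Type*} [NormedAddCommGroup E] [NormedSpace ℝ E]

/-- The Volterra integration operator `u ↦ (s ↦ ∫₀ˢ u)` on `C([0, 1], E)`. -/
noncomputable def volterra : C(unitInterval, E) →L[ℝ] C(unitInterval, E) :=
  have integrable (u : C(unitInterval, E)) (a b : ℝ) :
      IntervalIntegrable (IccExtend zero_le_one u) MeasureTheory.volume a b :=
    u.continuous.Icc_extend'.intervalIntegrable a b
  LinearMap.mkContinuous
    { toFun := fun u => ⟨fun s => ∫ q in (0 : ℝ)..s, IccExtend zero_le_one u q,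
        (intervalIntegral.continuous_primitive (integrable u) 0).comp continuous_subtype_val⟩
      map_add' := fun u v => by
        ext s
        exact intervalIntegral.integral_add (integrable u 0 s) (integrable v 0 s)
      map_smul' := fun c u => by
        ext s
        exact intervalIntegral.integral_smul c _ }
    1 fun u => by
      refine (ContinuousMap.norm_le _ (by positivity)).2 fun s => ?_
      calc ‖∫ q in (0 : ℝ)..s, IccExtend zero_le_one u q‖
          ≤ ‖u‖ * |(s : ℝ) - 0| := intervalIntegral.norm_integral_le_of_norm_le_const
            fun q _ => u.norm_coe_le_norm _
        _ ≤ 1 * ‖u‖ := by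
            rw [sub_zero, abs_of_nonneg s.2.1, mul_comm]
            gcongr
            exact s.2.2

theorem volterra_apply (u : C(unitInterval, E)) (s : unitInterval) :
    volterra u s = ∫ q in (0 : ℝ)..s, IccExtend zero_le_one u q :=
  rfl

theorem smul_volterra_comp_mulLeft (u : C(unitInterval, E)) (l s : unitInterval) :
    (l : ℝ) • volterra (u.comp (.mulLeft l)) s = volterra u (l * s) := by
  have hscale := intervalIntegral.smul_integral_comp_mul_left (a := (0 : ℝ)) (b := s)
    (IccExtend zero_le_one u) (l : ℝ)
  rw [mul_zero] at hscale
  rw [volterra_apply, volterra_apply, Set.Icc.coe_mul, ← hscale]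
  congr 1
  refine intervalIntegral.integral_congr fun q hq => ?_
  rw [uIcc_of_le s.2.1] at hq
  have hq' : q ∈ Icc (0 : ℝ) 1 := ⟨hq.1, hq.2.trans s.2.2⟩
  exact (IccExtend_of_mem _ _ hq').trans
    (IccExtend_of_mem zero_le_one u (unitInterval.mul_mem l.2 hq')).symm

end Volterra

theorem exists_analyticAt_fixedPoint {X U : Type*} [NormedAddCommGroup X] [NormedSpace ℝ X]
    [CompleteSpace X] [NormedAddCommGroup U] [NormedSpace ℝ U] [CompleteSpace U]
    {Φ : X × U → U} {x₀ : X} {u₀ : U} (hΦ : AnalyticAt ℝ Φ (x₀, u₀))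
    (hconst : ∀ u, Φ (x₀, u) = u₀) :
    ∃ w : X → U, AnalyticAt ℝ w x₀ ∧ w x₀ = u₀ ∧ (∀ᶠ x in 𝓝 x₀, Φ (x, w x) = w x) ∧
      ∀ᶠ z in 𝓝 (x₀, u₀), Φ z = z.2 → w z.1 = z.2 := by
  have hG : ContDiffAt ℝ ⊤ (fun z : X × U => z.2 - Φ z) (x₀, u₀) :=
    (analyticAt_snd.sub hΦ).contDiffAt
  have hderiv : fderiv ℝ (fun z : X × U => z.2 - Φ z) (x₀, u₀) ∘L .inr ℝ X U = .id ℝ U := by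
    have hpartial : HasFDerivAt (fun u => u - Φ (x₀, u))
        (fderiv ℝ (fun z : X × U => z.2 - Φ z) (x₀, u₀) ∘L .inr ℝ X U) u₀ :=
      (hG.differentiableAt (by simp)).hasFDerivAt.comp u₀ (hasFDerivAt_prodMk_right x₀ u₀)
    simp only [hconst] at hpartial
    exact hpartial.unique ((hasFDerivAt_id u₀).sub_const u₀)
  have hinv : (fderiv ℝ (fun z : X × U => z.2 - Φ z) (x₀, u₀) ∘L .inr ℝ X U).IsInvertible := by
    rw [hderiv]
    exact ⟨.refl ℝ U, rfl⟩
  have hzero : u₀ - Φ (x₀, u₀) = 0 := by rw [hconst, sub_self]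
  refine ⟨hG.implicitFunction (by simp) hinv, (hG.contDiffAt_implicitFunction _ hinv).analyticAt,
    hG.implicitFunction_apply_self _ hinv, ?_, ?_⟩
  · filter_upwards [hG.eventually_apply_implicitFunction (by simp) hinv] with x hx
    exact (sub_eq_zero.1 (hx.trans hzero)).symm
  · filter_upwards [hG.eventually_apply_eq_iff_implicitFunction (by simp) hinv] with z hz hfix
    exact hz.1 ((sub_eq_zero.2 hfix.symm).trans hzero.symm)

section Flow

variable {E : Type*} [NormedAddCommGroup E] [NormedSpace ℝ E] [CompleteSpace E]

omit [NormedSpace ℝ E] [CompleteSpace E] in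
theorem rescale_mem_ball {z : ℝ × E} {e₀ : E} {u : C(unitInterval, E)} {ρ : ℝ}
    (h : (z, u) ∈ Metric.ball ((0, e₀), .const _ e₀) ρ) (l : unitInterval) :
    (((l * z.1, z.2) : ℝ × E), u.comp (.mulLeft l)) ∈
      Metric.ball ((0, e₀), .const _ e₀) ρ := by
  simp only [← ball_prod_same, mem_prod, Metric.mem_ball] at h ⊢
  obtain ⟨⟨ht, he⟩, hu⟩ := h
  refine ⟨⟨lt_of_le_of_lt ?_ ht, he⟩, lt_of_le_of_lt ?_ hu⟩
  · rw [dist_zero_right, dist_zero_right, norm_mul, Real.norm_of_nonneg l.2.1]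
    exact mul_le_of_le_one_left (norm_nonneg _) l.2.2
  · exact (ContinuousMap.dist_le dist_nonneg).2 fun s =>
      u.dist_apply_le_dist (g := .const _ e₀) (l * s)

/-- The Picard operator `u ↦ e + t ∫₀ˢ N u`. Its fixed points are the solutions of `x' = t f(x)`,
`x(0) = e`, on `[0, 1]` when `N` is the superposition operator of `f`. -/
noncomputable def picard (N : C(unitInterval, E) → C(unitInterval, E))
    (p : (ℝ × E) × C(unitInterval, E)) : C(unitInterval, E) :=
  ContinuousLinearMap.const ℝ unitInterval p.1.2 + p.1.1 • volterra (N p.2)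

omit [CompleteSpace E] in
theorem analyticAt_picard {N : C(unitInterval, E) → C(unitInterval, E)} {e₀ : E}
    (hN : AnalyticAt ℝ N (.const _ e₀)) :
    AnalyticAt ℝ (picard N) ((0, e₀), .const _ e₀) := by
  have hconst : AnalyticAt ℝ (fun p : (ℝ × E) × C(unitInterval, E) =>
      ContinuousLinearMap.const ℝ unitInterval p.1.2) ((0, e₀), .const _ e₀) :=
    (ContinuousLinearMap.analyticAt _ _).comp (by fun_prop)
  have hint : AnalyticAt ℝ (fun p : (ℝ × E) × C(unitInterval, E) => volterra (N p.2))
      ((0, e₀), .const _ e₀) :=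
    (volterra.analyticAt _).comp (AnalyticAt.comp (g := N) (f := Prod.snd) hN analyticAt_snd)
  exact hconst.add ((analyticAt_fst_apply analyticAt_fst).smul hint)

theorem exists_analyticAt_rescaledFlow {f : E → E} {e₀ : E} (hf : AnalyticAt ℝ f e₀) :
    ∃ w : ℝ × E → C(unitInterval, E), AnalyticAt ℝ w (0, e₀) ∧ w (0, e₀) = .const _ e₀ ∧
      ∀ᶠ z in 𝓝 (0, e₀), (∀ l : unitInterval, w (l * z.1, z.2) 1 = w z l) ∧
        w z 1 = z.2 + z.1 • ∫ q in (0 : ℝ)..1, IccExtend zero_le_one (fun s => f (w z s)) q := by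
  obtain ⟨N, hN, hNf⟩ := exists_analyticAt_superposition (K := unitInterval) hf
  obtain ⟨w, hw, hw₀, hfix, huniq⟩ := exists_analyticAt_fixedPoint (analyticAt_picard hN)
    fun u => by simp [picard]; rfl
  refine ⟨w, hw, hw₀, ?_⟩
  obtain ⟨ρ, hρ, hball⟩ := Metric.eventually_nhds_iff_ball.1
    (huniq.and (continuousAt_snd.eventually hNf))
  have hwball : ∀ᶠ z in 𝓝 (0, e₀), (z, w z) ∈ Metric.ball ((0, e₀), .const _ e₀) ρ :=
    (continuousAt_id.prodMk hw.continuousAt).eventually_mem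
      (by rw [hw₀]; exact Metric.ball_mem_nhds _ hρ)
  filter_upwards [hfix, hwball] with z hz hzρ
  have hNw : ∀ s, N (w z) s = f (w z s) := (hball _ hzρ).2
  refine ⟨fun l => ?_, ?_⟩
  · obtain ⟨huniq', hNl⟩ := hball _ (rescale_mem_ball hzρ l)
    have hNcomp : N ((w z).comp (.mulLeft l)) = (N (w z)).comp (.mulLeft l) :=
      ContinuousMap.ext fun s => (hNl s).trans (hNw (l * s)).symm
    have hfixl : picard N ((l * z.1, z.2), (w z).comp (.mulLeft l)) = (w z).comp (.mulLeft l) := by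
      ext s
      have hzl := congrArg (fun u : C(unitInterval, E) => u (l * s)) hz
      simp only [picard, ContinuousMap.add_apply, ContinuousMap.smul_apply] at hzl ⊢
      rw [hNcomp, mul_comm, mul_smul, smul_volterra_comp_mulLeft]
      exact hzl
    exact (congrArg (fun u : C(unitInterval, E) => u 1) (huniq' hfixl)).trans
      (congrArg (w z) (mul_one l))
  · have hz1 := congrArg (fun u : C(unitInterval, E) => u 1) hz
    rw [show (fun s => f (w z s)) = N (w z) from funext fun s => (hNw s).symm]
    exact hz1.symm

theorem exists_analyticAt_integralEq {f : E → E} {e₀ : E} (hf : AnalyticAt ℝ f e₀) :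
    ∃ S : ℝ × E → E, AnalyticAt ℝ S (0, e₀) ∧ S (0, e₀) = e₀ ∧
      ∀ᶠ z in 𝓝 (0, e₀), S z = z.2 + ∫ t in (0 : ℝ)..z.1, f (S (t, z.2)) := by
  obtain ⟨w, hw, hw₀, hev⟩ := exists_analyticAt_rescaledFlow hf
  refine ⟨fun z => w z 1, AnalyticAt.comp (g := ContinuousMap.evalCLM ℝ (1 : unitInterval))
    (ContinuousLinearMap.analyticAt _ _) hw, by simp [hw₀], ?_⟩
  filter_upwards [hev] with z ⟨hscale, hint⟩
  have hsub := intervalIntegral.smul_integral_comp_mul_right (a := (0 : ℝ)) (b := 1)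
    (fun t => f (w (t, z.2) 1)) z.1
  rw [zero_mul, one_mul] at hsub
  rw [hint, ← hsub]
  congr 2
  refine intervalIntegral.integral_congr fun q hq => ?_
  rw [uIcc_of_le zero_le_one] at hq
  exact (IccExtend_of_mem _ _ hq).trans (congrArg f (hscale ⟨q, hq⟩).symm)

theorem exists_analyticAt_flow {f : E → E} {e₀ : E} (hf : AnalyticAt ℝ f e₀) :
    ∃ S : ℝ × E → E, AnalyticAt ℝ S (0, e₀) ∧ (∀ᶠ e in 𝓝 e₀, S (0, e) = e) ∧
      ∀ᶠ z in 𝓝 (0, e₀), HasDerivAt (fun t => S (t, z.2)) (f (S z)) z.1 := by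
  obtain ⟨S, hS, hS₀, hint⟩ := exists_analyticAt_integralEq hf
  refine ⟨S, hS, ?_, ?_⟩
  · filter_upwards [(Continuous.prodMk_right (0 : ℝ)).continuousAt.eventually hint] with e he
    simpa using he
  have hfS : AnalyticAt ℝ (fun z => f (S z)) (0, e₀) := AnalyticAt.comp (g := f) (by rwa [hS₀]) hS
  obtain ⟨ρ, hρ, hball⟩ := Metric.eventually_nhds_iff_ball.1
    (hint.and (hfS.eventually_analyticAt))
  filter_upwards [Metric.ball_mem_nhds _ hρ] with z hz
  rw [← ball_prod_same] at hz hball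
  have hline : ∀ t ∈ Metric.ball (0 : ℝ) ρ, S (t, z.2) = z.2 + ∫ q in (0 : ℝ)..t, f (S (q, z.2)) :=
    fun t ht => (hball (t, z.2) ⟨ht, hz.2⟩).1
  have hcont : ContinuousOn (fun t => f (S (t, z.2))) (Metric.ball 0 ρ) := fun t ht =>
    (ContinuousAt.comp (f := fun t => (t, z.2)) (hball (t, z.2) ⟨ht, hz.2⟩).2.continuousAt
      (by fun_prop)).continuousWithinAt
  have hseg : uIcc 0 z.1 ⊆ Metric.ball (0 : ℝ) ρ :=
    (convex_ball (0 : ℝ) ρ).ordConnected.uIcc_subset (Metric.mem_ball_self hρ) hz.1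
  have hftc := intervalIntegral.integral_hasDerivAt_right (hcont.mono hseg).intervalIntegrable
    (hcont.stronglyMeasurableAtFilter Metric.isOpen_ball _ hz.1)
    (hcont.continuousAt (Metric.isOpen_ball.mem_nhds hz.1))
  refine (hftc.const_add z.2).congr_of_eventuallyEq ?_
  filter_upwards [Metric.isOpen_ball.mem_nhds hz.1] with t ht using hline t ht

end Flow

section SecondOrder

variable {P E : Type*} [NormedAddCommGroup P] [NormedSpace ℝ P]
  [NormedAddCommGroup E] [NormedSpace ℝ E]

omit [NormedSpace ℝ P] in
theorem eventually_eq_of_hasDerivAt_zero {g : ℝ × P → E} {y₀ : P}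
    (h : ∀ᶠ q in 𝓝 (0, y₀), HasDerivAt (fun t => g (t, q.2)) 0 q.1) :
    ∀ᶠ q in 𝓝 (0, y₀), g q = g (0, q.2) := by
  obtain ⟨ρ, hρ, hball⟩ := Metric.eventually_nhds_iff_ball.1 h
  filter_upwards [Metric.ball_mem_nhds _ hρ] with q hq
  rw [← ball_prod_same] at hq hball
  exact (convex_ball (0 : ℝ) ρ).is_const_of_fderivWithin_eq_zero (𝕜 := ℝ)
    (f := fun t => g (t, q.2))
    (fun t ht => (hball (t, q.2) ⟨ht, hq.2⟩).differentiableAt.differentiableWithinAt)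
    (fun t ht => by
      have := (hball (t, q.2) ⟨ht, hq.2⟩).hasFDerivAt.fderiv
      rw [fderivWithin_of_isOpen Metric.isOpen_ball ht, this]
      simp) hq.1 (Metric.mem_ball_self hρ)

variable [CompleteSpace P] [CompleteSpace E]

theorem exists_analyticAt_secondOrder {F : ℝ × P × E × E → E} {a b : P → E} {y₀ : P}
    (hF : AnalyticAt ℝ F (0, y₀, a y₀, b y₀)) (ha : AnalyticAt ℝ a y₀) (hb : AnalyticAt ℝ b y₀) :
    ∃ u v : ℝ × P → E, AnalyticAt ℝ u (0, y₀) ∧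
      (∀ᶠ y in 𝓝 y₀, u (0, y) = a y ∧ v (0, y) = b y) ∧
      ∀ᶠ q in 𝓝 (0, y₀), HasDerivAt (fun t => u (t, q.2)) (v q) q.1 ∧
        HasDerivAt (fun t => v (t, q.2)) (F (q.1, q.2, u q, v q)) q.1 := by
  have hvf : AnalyticAt ℝ (fun z : ℝ × P × E × E => ((1 : ℝ), (0 : P), z.2.2.2, F z))
      (0, y₀, a y₀, b y₀) := by fun_prop
  obtain ⟨S, hS, hS₀, hflow⟩ := exists_analyticAt_flow hvf
  let ι : P → ℝ × P × E × E := fun y => (0, y, a y, b y)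
  have hι : AnalyticAt ℝ ι y₀ := by fun_prop
  let Z : ℝ × P → ℝ × P × E × E := fun q => S (q.1, ι q.2)
  have hιq : AnalyticAt ℝ (fun q : ℝ × P => (q.1, ι q.2)) (0, y₀) :=
    analyticAt_fst.prod (hι.comp_of_eq analyticAt_snd rfl)
  have hZ : AnalyticAt ℝ Z (0, y₀) := hS.comp_of_eq hιq rfl
  have hZ₀ : ∀ᶠ y in 𝓝 y₀, Z (0, y) = ι y := hι.continuousAt.eventually hS₀
  have hZflow : ∀ᶠ q in 𝓝 (0, y₀),
      HasDerivAt (fun t => Z (t, q.2)) (1, 0, (Z q).2.2.2, F (Z q)) q.1 :=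
    hιq.continuousAt.eventually hflow
  have hbase : ∀ᶠ q in 𝓝 ((0 : ℝ), y₀), ((Z q).1 - q.1, (Z q).2.1) = ((0 : ℝ), q.2) := by
    have hconst := eventually_eq_of_hasDerivAt_zero (g := fun q => ((Z q).1 - q.1, (Z q).2.1))
      (hZflow.mono fun q hq => by
        have ht : HasDerivAt (fun t => (Z (t, q.2)).1) 1 q.1 := hq.fst
        have hy : HasDerivAt (fun t => (Z (t, q.2)).2.1) 0 q.1 := hq.snd.fst
        have hty := (ht.sub (hasDerivAt_id' q.1)).prodMk hy
        rwa [sub_self, Prod.mk_zero_zero] at hty)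
    filter_upwards [hconst, continuousAt_snd.eventually hZ₀] with q hq hq₀
    rw [hq, hq₀]
    simp [ι]
  refine ⟨fun q => (Z q).2.2.1, fun q => (Z q).2.2.2, by fun_prop, ?_, ?_⟩
  · filter_upwards [hZ₀] with y hy
    simp [hy, ι]
  · filter_upwards [hZflow, hbase] with q hq hqbase
    obtain ⟨ht, hy⟩ := Prod.ext_iff.1 hqbase
    have hZq : Z q = (q.1, q.2, (Z q).2.2.1, (Z q).2.2.2) :=
      Prod.ext (sub_eq_zero.1 ht) (Prod.ext hy rfl)
    rw [← hZq]
    exact ⟨hq.snd.snd.fst, hq.snd.snd.snd⟩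

end SecondOrder

section DirDeriv

variable {E F : Type*} [NormedAddCommGroup E] [NormedSpace ℝ E]
  [NormedAddCommGroup F] [NormedSpace ℝ F] {f g : E → F} {p : E}

/-- The derivative of `f` at `p` in the direction `v`. Unlike `lineDeriv`, it is taken from the
Fréchet derivative, so that it is linear in `v` without any assumption. -/
noncomputable def dirDeriv (v : E) (f : E → F) (p : E) : F :=
  fderiv ℝ f p v

@[fun_prop]
theorem analyticAt_dirDeriv [CompleteSpace F] (hf : AnalyticAt ℝ f p) (v : E) :
    AnalyticAt ℝ (dirDeriv v f) p :=
  ((ContinuousLinearMap.apply ℝ F v).analyticAt _).comp hf.fderiv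

theorem dirDeriv_eventuallyEq (h : f =ᶠ[𝓝 p] g) (v : E) : dirDeriv v f =ᶠ[𝓝 p] dirDeriv v g :=
  (h.fderiv (𝕜 := ℝ)).fun_comp fun L => L v

theorem dirDeriv_comm [CompleteSpace F] (hf : AnalyticAt ℝ f p) (v w : E) :
    dirDeriv v (dirDeriv w f) p = dirDeriv w (dirDeriv v f) p := by
  have hsecond (v w : E) : dirDeriv v (dirDeriv w f) p = fderiv ℝ (fderiv ℝ f) p v w := by
    change fderiv ℝ (fun q => fderiv ℝ f q w) p v = _
    rw [fderiv_clm_apply hf.fderiv.differentiableAt (differentiableAt_const w)]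
    simp
  rw [hsecond, hsecond]
  exact ContDiffAt.isSymmSndFDerivAt_of_omega hf.contDiffAt v w

theorem hasDerivAt_comp_dirDeriv {γ : ℝ → E} {v : E} {t : ℝ} (hf : AnalyticAt ℝ f (γ t))
    (hγ : HasDerivAt γ v t) : HasDerivAt (fun s => f (γ s)) (dirDeriv v f (γ t)) t :=
  hf.differentiableAt.hasFDerivAt.comp_hasDerivAt t hγ

end DirDeriv

local notation "∂x" => dirDeriv ((1 : ℝ), (0 : ℝ))
local notation "∂y" => dirDeriv ((0 : ℝ), (1 : ℝ))
local notation "∂₁" => dirDeriv ((1 : ℝ), (0 : ℝ), (0 : ℝ))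
local notation "∂₂" => dirDeriv ((0 : ℝ), (1 : ℝ), (0 : ℝ))
local notation "∂₃" => dirDeriv ((0 : ℝ), (0 : ℝ), (1 : ℝ))

section Partial

variable {k l : ℝ × ℝ → ℝ} {q : ℝ × ℝ}

theorem dirDeriv_prod (k : ℝ × ℝ → ℝ) (a b : ℝ) (q : ℝ × ℝ) :
    dirDeriv (a, b) k q = ∂x k q * a + ∂y k q * b := by
  have hv : ((a, b) : ℝ × ℝ) = a • (1, 0) + b • (0, 1) := by simp
  rw [dirDeriv, hv, map_add, map_smul, map_smul, smul_eq_mul, smul_eq_mul, mul_comm a, mul_comm b]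
  rfl

theorem dirDeriv_prod₃ (B : ℝ × ℝ × ℝ → ℝ) (a b c : ℝ) (z : ℝ × ℝ × ℝ) :
    dirDeriv (a, b, c) B z = ∂₁ B z * a + ∂₂ B z * b + ∂₃ B z * c := by
  have hv : ((a, b, c) : ℝ × ℝ × ℝ) = a • (1, 0, 0) + b • (0, 1, 0) + c • (0, 0, 1) := by simp
  rw [dirDeriv, hv, map_add, map_add, map_smul, map_smul, map_smul, smul_eq_mul, smul_eq_mul,
    smul_eq_mul, mul_comm a, mul_comm b, mul_comm c]
  rfl

theorem hasDerivAt_comp₂ {X Y : ℝ → ℝ} {X' Y' t : ℝ} (hk : AnalyticAt ℝ k (X t, Y t))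
    (hX : HasDerivAt X X' t) (hY : HasDerivAt Y Y' t) :
    HasDerivAt (fun s => k (X s, Y s)) (∂x k (X t, Y t) * X' + ∂y k (X t, Y t) * Y') t := by
  rw [← dirDeriv_prod]
  exact hasDerivAt_comp_dirDeriv (γ := fun s => (X s, Y s)) hk (hX.prodMk hY)

theorem hasDerivAt_comp₃ {B : ℝ × ℝ × ℝ → ℝ} {X Y P : ℝ → ℝ} {X' Y' P' t : ℝ}
    (hB : AnalyticAt ℝ B (X t, Y t, P t)) (hX : HasDerivAt X X' t) (hY : HasDerivAt Y Y' t)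
    (hP : HasDerivAt P P' t) :
    HasDerivAt (fun s => B (X s, Y s, P s)) (∂₁ B (X t, Y t, P t) * X' +
      ∂₂ B (X t, Y t, P t) * Y' + ∂₃ B (X t, Y t, P t) * P') t := by
  rw [← dirDeriv_prod₃]
  exact hasDerivAt_comp_dirDeriv (γ := fun s => (X s, Y s, P s)) hB (hX.prodMk (hY.prodMk hP))

theorem hasDerivAt_line_x (hk : AnalyticAt ℝ k q) :
    HasDerivAt (fun t => k (t, q.2)) (∂x k q) q.1 :=
  hasDerivAt_comp_dirDeriv (γ := fun t => (t, q.2)) hk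
    ((hasDerivAt_id q.1).prodMk (hasDerivAt_const q.1 q.2))

theorem hasDerivAt_line_y (hk : AnalyticAt ℝ k q) :
    HasDerivAt (fun t => k (q.1, t)) (∂y k q) q.2 :=
  hasDerivAt_comp_dirDeriv (γ := fun t => (q.1, t)) hk
    ((hasDerivAt_const q.2 q.1).prodMk (hasDerivAt_id q.2))

end Partial

theorem exists_analyticAt_partial_x_partial_x_eq {F : ℝ × ℝ × ℝ × ℝ → ℝ} {a b : ℝ → ℝ}
    (hF : AnalyticAt ℝ F (0, 0, a 0, b 0)) (ha : AnalyticAt ℝ a 0) (hb : AnalyticAt ℝ b 0) :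
    ∃ u : ℝ × ℝ → ℝ, AnalyticAt ℝ u 0 ∧ (∀ᶠ Y in 𝓝 0, u (0, Y) = a Y ∧ ∂x u (0, Y) = b Y) ∧
      ∀ᶠ q in 𝓝 0, ∂x (∂x u) q = F (q.1, q.2, u q, ∂x u q) := by
  obtain ⟨u, v, hu, hinit, hode⟩ := exists_analyticAt_secondOrder hF ha hb
  have hv : ∂x u =ᶠ[𝓝 0] v := by
    filter_upwards [hode, hu.eventually_analyticAt] with q hq huq
    exact (hasDerivAt_line_x huq).unique hq.1
  refine ⟨u, hu, ?_, ?_⟩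
  · filter_upwards [hinit, (Continuous.prodMk_right (0 : ℝ)).continuousAt.eventually hv]
      with Y hY hvY
    exact ⟨hY.1, hvY.trans hY.2⟩
  · filter_upwards [hode, hv.eventuallyEq_nhds, hu.eventually_analyticAt] with q hq hvq huq
    rw [hvq.eq_of_nhds]
    refine (hasDerivAt_line_x (analyticAt_dirDeriv huq _)).unique (hq.2.congr_of_eventuallyEq ?_)
    exact (Continuous.prodMk_left q.2).continuousAt.eventually hvq

theorem exists_analyticAt_deriv_deriv_eq {E : Type*} [NormedAddCommGroup E] [NormedSpace ℝ E]
    [CompleteSpace E] {F : ℝ × E × E → E} {a b : E} (hF : AnalyticAt ℝ F (0, a, b)) :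
    ∃ u : ℝ → E, AnalyticAt ℝ u 0 ∧ u 0 = a ∧ deriv u 0 = b ∧
      ∀ᶠ t in 𝓝 0, deriv (deriv u) t = F (t, u t, deriv u t) := by
  obtain ⟨u, v, hu, hinit, hode⟩ := exists_analyticAt_secondOrder (P := ℝ) (y₀ := 0)
    (F := fun z => F (z.1, z.2.2)) (a := fun _ => a) (b := fun _ => b)
    (AnalyticAt.comp (g := F) (f := fun z : ℝ × ℝ × E × E => (z.1, z.2.2)) hF (by fun_prop))
    analyticAt_const analyticAt_const
  have hline : ∀ᶠ t in 𝓝 (0 : ℝ), HasDerivAt (fun s => u (s, 0)) (v (t, 0)) t ∧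
      HasDerivAt (fun s => v (s, 0)) (F (t, u (t, 0), v (t, 0))) t :=
    (Continuous.prodMk_left (0 : ℝ)).continuousAt.eventually hode
  have hv : deriv (fun s => u (s, 0)) =ᶠ[𝓝 0] fun t => v (t, 0) :=
    hline.mono fun t ht => ht.1.deriv
  refine ⟨fun t => u (t, 0), ?_, hinit.self_of_nhds.1, hv.eq_of_nhds.trans hinit.self_of_nhds.2, ?_⟩
  · exact AnalyticAt.comp (g := u) (f := fun t : ℝ => (t, (0 : ℝ))) hu (by fun_prop)
  · filter_upwards [hline, hv.eventuallyEq_nhds] with t ht hvt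
    rw [hvt.deriv_eq, ht.2.deriv, hvt.eq_of_nhds]

theorem exists_analyticAt_deriv_deriv_eq_pair {F G : ℝ × ℝ × ℝ × ℝ × ℝ → ℝ} {a b c d : ℝ}
    (hF : AnalyticAt ℝ F (0, a, b, c, d)) (hG : AnalyticAt ℝ G (0, a, b, c, d)) :
    ∃ u v : ℝ → ℝ, AnalyticAt ℝ u 0 ∧ AnalyticAt ℝ v 0 ∧ u 0 = a ∧ v 0 = b ∧
      deriv u 0 = c ∧ deriv v 0 = d ∧ ∀ᶠ t in 𝓝 0,
        deriv (deriv u) t = F (t, u t, v t, deriv u t, deriv v t) ∧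
          deriv (deriv v) t = G (t, u t, v t, deriv u t, deriv v t) := by
  let assoc (z : ℝ × (ℝ × ℝ) × ℝ × ℝ) : ℝ × ℝ × ℝ × ℝ × ℝ := (z.1, z.2.1.1, z.2.1.2, z.2.2)
  have hassoc : AnalyticAt ℝ assoc (0, (a, b), c, d) := by fun_prop
  obtain ⟨w, hw, hw₀, hw₁, hode⟩ := exists_analyticAt_deriv_deriv_eq
    (F := fun z => (F (assoc z), G (assoc z))) (a := (a, b)) (b := (c, d))
    ((AnalyticAt.comp (g := F) (f := assoc) hF hassoc).prod
      (AnalyticAt.comp (g := G) (f := assoc) hG hassoc))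
  have hderiv {γ : ℝ → ℝ × ℝ} {t : ℝ} (hγ : AnalyticAt ℝ γ t) :
      deriv (fun s => (γ s).1) t = (deriv γ t).1 ∧ deriv (fun s => (γ s).2) t = (deriv γ t).2 :=
    ⟨((ContinuousLinearMap.fst ℝ ℝ ℝ).hasFDerivAt.comp_hasDerivAt t
        hγ.differentiableAt.hasDerivAt).deriv,
      ((ContinuousLinearMap.snd ℝ ℝ ℝ).hasFDerivAt.comp_hasDerivAt t
        hγ.differentiableAt.hasDerivAt).deriv⟩
  refine ⟨fun t => (w t).1, fun t => (w t).2, by fun_prop, by fun_prop, congrArg Prod.fst hw₀,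
    congrArg Prod.snd hw₀, by rw [(hderiv hw).1, hw₁], by rw [(hderiv hw).2, hw₁], ?_⟩
  filter_upwards [hode, hw.eventually_analyticAt.eventually_nhds] with t ht hwt
  have hwt' := hwt.mono fun s hs => hderiv hs
  have hsecond := hderiv hwt.self_of_nhds.deriv
  rw [EventuallyEq.deriv_eq (hwt'.mono fun s hs => hs.1),
    EventuallyEq.deriv_eq (hwt'.mono fun s hs => hs.2), hsecond.1, hsecond.2, ht,
    hwt'.self_of_nhds.1, hwt'.self_of_nhds.2]
  exact ⟨rfl, rfl⟩

theorem dirDeriv_comp₂ {E : Type*} [NormedAddCommGroup E] [NormedSpace ℝ E] {k : ℝ × ℝ → ℝ}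
    {f g : E → ℝ} {q : E} (hk : AnalyticAt ℝ k (f q, g q)) (hf : AnalyticAt ℝ f q)
    (hg : AnalyticAt ℝ g q) (v : E) :
    dirDeriv v (fun p => k (f p, g p)) q =
      ∂x k (f q, g q) * dirDeriv v f q + ∂y k (f q, g q) * dirDeriv v g q := by
  have hcomp := hk.differentiableAt.hasFDerivAt.comp q
    (hf.differentiableAt.hasFDerivAt.prodMk hg.differentiableAt.hasFDerivAt)
  rw [← dirDeriv_prod]
  exact congrArg (fun L => L v) hcomp.fderiv

section Jet

/-- The function `X` of one variable is twice differentiable at `t`, with first and second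
derivatives `X₁` and `X₂` there. -/
structure HasJet2At (X : ℝ → ℝ) (t X₁ X₂ : ℝ) : Prop where
  eventually_differentiableAt : ∀ᶠ s in 𝓝 t, DifferentiableAt ℝ X s
  deriv_eq : deriv X t = X₁
  hasDerivAt_deriv : HasDerivAt (deriv X) X₂ t

variable {X Y : ℝ → ℝ} {k : ℝ × ℝ → ℝ} {t X₁ X₂ Y₁ Y₂ P : ℝ}

theorem HasJet2At.hasDerivAt (hX : HasJet2At X t X₁ X₂) : HasDerivAt X X₁ t :=
  hX.deriv_eq ▸ hX.eventually_differentiableAt.self_of_nhds.hasDerivAt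

theorem HasJet2At.unique (hX : HasJet2At X t X₁ X₂) (hX' : HasJet2At X t Y₁ Y₂) :
    X₁ = Y₁ ∧ X₂ = Y₂ :=
  ⟨hX.deriv_eq.symm.trans hX'.deriv_eq, hX.hasDerivAt_deriv.unique hX'.hasDerivAt_deriv⟩

theorem HasJet2At.of_hasDerivAt {X' : ℝ → ℝ} (hX : ∀ᶠ s in 𝓝 t, HasDerivAt X (X' s) s)
    (hX' : HasDerivAt X' X₂ t) : HasJet2At X t (X' t) X₂ where
  eventually_differentiableAt := hX.mono fun _ hs => hs.differentiableAt
  deriv_eq := hX.self_of_nhds.deriv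
  hasDerivAt_deriv := hX'.congr_of_eventuallyEq (hX.mono fun _ hs => hs.deriv)

theorem HasJet2At.congr (hX : HasJet2At X t X₁ X₂) (h : Y =ᶠ[𝓝 t] X) : HasJet2At Y t X₁ X₂ where
  eventually_differentiableAt := by
    filter_upwards [hX.eventually_differentiableAt, h.eventuallyEq_nhds] with s hs hYX
    exact hs.congr_of_eventuallyEq hYX
  deriv_eq := h.deriv_eq.trans hX.deriv_eq
  hasDerivAt_deriv := hX.hasDerivAt_deriv.congr_of_eventuallyEq h.deriv

theorem hasJet2At_affine (a b t : ℝ) : HasJet2At (fun s => a + b * s) t b 0 :=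
  .of_hasDerivAt (X' := fun _ => b)
    (Eventually.of_forall fun s => by simpa using ((hasDerivAt_id' s).const_mul b).const_add a)
    (hasDerivAt_const t b)

/-- The total derivative `k_x + k_y p` of a function on the plane, as a function of `(x, y, p)`:
the derivative of `k` along a graph through `(x, y)` with slope `p`. -/
noncomputable def totalDeriv (k : ℝ × ℝ → ℝ) (z : ℝ × ℝ × ℝ) : ℝ :=
  ∂x k (z.1, z.2.1) + ∂y k (z.1, z.2.1) * z.2.2

/-- The part `k_xx + 2 k_xy p + k_yy p²` of the second derivative of `k` along a graph through
`(x, y)` with slope `p` that does not depend on the curvature of the graph. -/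
noncomputable def totalDeriv₂ (k : ℝ × ℝ → ℝ) (z : ℝ × ℝ × ℝ) : ℝ :=
  ∂x (∂x k) (z.1, z.2.1) + 2 * ∂x (∂y k) (z.1, z.2.1) * z.2.2 +
    ∂y (∂y k) (z.1, z.2.1) * z.2.2 ^ 2

theorem HasJet2At.comp₂ (hX : HasJet2At X t X₁ X₂) (hY : HasJet2At Y t (P * X₁) Y₂)
    (hk : AnalyticAt ℝ k (X t, Y t)) :
    HasJet2At (fun s => k (X s, Y s)) t (totalDeriv k (X t, Y t, P) * X₁)
      (∂x k (X t, Y t) * X₂ + ∂y k (X t, Y t) * Y₂ + totalDeriv₂ k (X t, Y t, P) * X₁ ^ 2) := by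
  have hcont : ContinuousAt (fun s => (X s, Y s)) t :=
    hX.hasDerivAt.continuousAt.prodMk hY.hasDerivAt.continuousAt
  have hfirst : ∀ᶠ s in 𝓝 t, HasDerivAt (fun s => k (X s, Y s))
      (∂x k (X s, Y s) * deriv X s + ∂y k (X s, Y s) * deriv Y s) s := by
    filter_upwards [hcont.eventually hk.eventually_analyticAt, hX.eventually_differentiableAt,
      hY.eventually_differentiableAt] with s hks hXs hYs
    exact hasDerivAt_comp₂ hks hXs.hasDerivAt hYs.hasDerivAt
  have hsecond := HasJet2At.of_hasDerivAt hfirst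
    (((hasDerivAt_comp₂ (analyticAt_dirDeriv hk _) hX.hasDerivAt hY.hasDerivAt).mul
      hX.hasDerivAt_deriv).add
    ((hasDerivAt_comp₂ (analyticAt_dirDeriv hk _) hX.hasDerivAt hY.hasDerivAt).mul
      hY.hasDerivAt_deriv))
  rw [hX.deriv_eq, hY.deriv_eq] at hsecond
  convert! hsecond using 1
  · rw [totalDeriv]
    ring
  · rw [totalDeriv₂, dirDeriv_comm hk (0, 1) (1, 0)]
    ring

theorem hasJet2At_line {z : ℝ × ℝ × ℝ} (hk : AnalyticAt ℝ k (z.1, z.2.1)) :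
    HasJet2At (fun t => k (z.1 + 1 * t, z.2.1 + z.2.2 * t)) 0 (totalDeriv k z)
      (totalDeriv₂ k z) := by
  have hY := hasJet2At_affine z.2.1 z.2.2 0
  rw [← mul_one z.2.2] at hY
  simpa using (hasJet2At_affine z.1 1 0).comp₂ hY (by simpa using hk)

end Jet

section Pullback

variable {B : ℝ × ℝ × ℝ → ℝ} {f k f' k' : ℝ × ℝ → ℝ}

/-- The Jacobian determinant of `(f, k)`. -/
noncomputable def jacobian (f k : ℝ × ℝ → ℝ) (q : ℝ × ℝ) : ℝ :=
  ∂x f q * ∂y k q - ∂y f q * ∂x k q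

/-- The action of the point transformation `(f, k)` on triples `(x, y, p)`, where `p` is the slope
of a graph through `(x, y)`. -/
noncomputable def prolong (f k : ℝ × ℝ → ℝ) (z : ℝ × ℝ × ℝ) : ℝ × ℝ × ℝ :=
  (f (z.1, z.2.1), k (z.1, z.2.1), totalDeriv k z / totalDeriv f z)

/-- The right-hand side of the second order equation that `(f, k)` transforms into
`y'' = B(x, y, y')`: one solves for `Y''` the equation expressing that the image under `(f, k)` of
the graph of `Y` solves the latter. -/
noncomputable def pullback (B : ℝ × ℝ × ℝ → ℝ) (f k : ℝ × ℝ → ℝ) (z : ℝ × ℝ × ℝ) : ℝ :=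
  (totalDeriv f z ^ 3 * B (prolong f k z) - totalDeriv₂ k z * totalDeriv f z +
    totalDeriv k z * totalDeriv₂ f z) / jacobian f k (z.1, z.2.1)

theorem jacobian_mul_pullback {z : ℝ × ℝ × ℝ} (hJ : jacobian f k (z.1, z.2.1) ≠ 0) :
    jacobian f k (z.1, z.2.1) * pullback B f k z = totalDeriv f z ^ 3 * B (prolong f k z) -
      totalDeriv₂ k z * totalDeriv f z + totalDeriv k z * totalDeriv₂ f z :=
  mul_div_cancel₀ _ hJ

theorem pullback_eq_of_hasJet2At {X Y : ℝ → ℝ} {t X₁ X₂ Y₁ Y₂ x₁ x₂ y₁ y₂ : ℝ}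
    (hX : HasJet2At X t X₁ X₂) (hY : HasJet2At Y t Y₁ Y₂) (hX₁ : X₁ ≠ 0)
    (hf : AnalyticAt ℝ f (X t, Y t)) (hk : AnalyticAt ℝ k (X t, Y t))
    (hJ : jacobian f k (X t, Y t) ≠ 0) (hx : HasJet2At (fun s => f (X s, Y s)) t x₁ x₂)
    (hy : HasJet2At (fun s => k (X s, Y s)) t y₁ y₂)
    (hB : x₁ * y₂ - y₁ * x₂ = x₁ ^ 3 * B (f (X t, Y t), k (X t, Y t), y₁ / x₁)) :
    X₁ * Y₂ - Y₁ * X₂ = X₁ ^ 3 * pullback B f k (X t, Y t, Y₁ / X₁) := by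
  obtain ⟨P, rfl⟩ : ∃ P, Y₁ = P * X₁ := ⟨Y₁ / X₁, (div_mul_cancel₀ _ hX₁).symm⟩
  obtain ⟨rfl, rfl⟩ := hx.unique (hX.comp₂ hY hf)
  obtain ⟨rfl, rfl⟩ := hy.unique (hX.comp₂ hY hk)
  rw [mul_div_mul_right _ _ hX₁] at hB
  rw [mul_div_cancel_right₀ _ hX₁, pullback, ← mul_div_assoc, eq_div_iff hJ, prolong]
  simp only [jacobian, totalDeriv] at hB ⊢
  linear_combination hB

theorem totalDeriv_comp {z : ℝ × ℝ × ℝ} (hf : AnalyticAt ℝ f (f' (z.1, z.2.1), k' (z.1, z.2.1)))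
    (hf' : AnalyticAt ℝ f' (z.1, z.2.1)) (hk' : AnalyticAt ℝ k' (z.1, z.2.1))
    (hD : totalDeriv f' z ≠ 0) :
    totalDeriv (fun q => f (f' q, k' q)) z = totalDeriv f (prolong f' k' z) * totalDeriv f' z ∧
      totalDeriv₂ (fun q => f (f' q, k' q)) z =
        ∂x f (f' (z.1, z.2.1), k' (z.1, z.2.1)) * totalDeriv₂ f' z +
        ∂y f (f' (z.1, z.2.1), k' (z.1, z.2.1)) * totalDeriv₂ k' z +
        totalDeriv₂ f (prolong f' k' z) * totalDeriv f' z ^ 2 := by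
  have hcomp : AnalyticAt ℝ (fun q => f (f' q, k' q)) (z.1, z.2.1) := hf.comp₂ hf' hk'
  have hjet := hasJet2At_line hk'
  rw [← div_mul_cancel₀ (totalDeriv k' z) hD] at hjet
  simpa [prolong] using
    (hasJet2At_line hcomp).unique ((hasJet2At_line hf').comp₂ hjet (by simpa using hf))

theorem jacobian_comp {q : ℝ × ℝ} (hf : AnalyticAt ℝ f (f' q, k' q))
    (hk : AnalyticAt ℝ k (f' q, k' q)) (hf' : AnalyticAt ℝ f' q) (hk' : AnalyticAt ℝ k' q) :
    jacobian (fun q => f (f' q, k' q)) (fun q => k (f' q, k' q)) q =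
      jacobian f k (f' q, k' q) * jacobian f' k' q := by
  simp only [jacobian, dirDeriv_comp₂ hf hf' hk', dirDeriv_comp₂ hk hf' hk']
  ring

theorem pullback_comp {z : ℝ × ℝ × ℝ} (hf : AnalyticAt ℝ f (f' (z.1, z.2.1), k' (z.1, z.2.1)))
    (hk : AnalyticAt ℝ k (f' (z.1, z.2.1), k' (z.1, z.2.1)))
    (hf' : AnalyticAt ℝ f' (z.1, z.2.1)) (hk' : AnalyticAt ℝ k' (z.1, z.2.1))
    (hD : totalDeriv f' z ≠ 0) (hJ : jacobian f k (f' (z.1, z.2.1), k' (z.1, z.2.1)) ≠ 0)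
    (hJ' : jacobian f' k' (z.1, z.2.1) ≠ 0) :
    pullback (pullback B f k) f' k' z =
      pullback B (fun q => f (f' q, k' q)) (fun q => k (f' q, k' q)) z := by
  obtain ⟨hf₁, hf₂⟩ := totalDeriv_comp hf hf' hk' hD
  obtain ⟨hk₁, hk₂⟩ := totalDeriv_comp hk hf' hk' hD
  have hprolong : prolong (fun q => f (f' q, k' q)) (fun q => k (f' q, k' q)) z =
      prolong f k (prolong f' k' z) := by
    rw [prolong, hf₁, hk₁, mul_div_mul_right _ _ hD]
    rfl
  have hslope : totalDeriv k' z = (prolong f' k' z).2.2 * totalDeriv f' z :=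
    (div_mul_cancel₀ _ hD).symm
  have hslope_f : totalDeriv f (prolong f' k' z) = ∂x f (f' (z.1, z.2.1), k' (z.1, z.2.1)) +
    ∂y f (f' (z.1, z.2.1), k' (z.1, z.2.1)) * (prolong f' k' z).2.2 := rfl
  have hslope_k : totalDeriv k (prolong f' k' z) = ∂x k (f' (z.1, z.2.1), k' (z.1, z.2.1)) +
    ∂y k (f' (z.1, z.2.1), k' (z.1, z.2.1)) * (prolong f' k' z).2.2 := rfl
  have hinner : jacobian f k (f' (z.1, z.2.1), k' (z.1, z.2.1)) * _ = _ :=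
    jacobian_mul_pullback (B := B) (z := prolong f' k' z) hJ
  rw [jacobian, hslope_f, hslope_k] at hinner
  have houter := jacobian_mul_pullback (B := pullback B f k) hJ'
  have hcomp := jacobian_mul_pullback (B := B)
    ((jacobian_comp hf hk hf' hk').trans_ne (mul_ne_zero hJ hJ'))
  rw [jacobian_comp hf hk hf' hk', hprolong, hf₁, hf₂, hk₁, hk₂] at hcomp
  refine mul_left_cancel₀ (mul_ne_zero hJ hJ') ?_
  rw [hcomp, mul_assoc, houter, hslope, hslope_f, hslope_k, jacobian]
  linear_combination totalDeriv f' z ^ 3 * hinner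

end Pullback

section Admissible

variable {B B' B'' : ℝ × ℝ × ℝ → ℝ} {f k f' k' : ℝ × ℝ → ℝ}

/-- An analytic point transformation `(f, k)` near the origin which fixes the origin and the
horizontal direction there, so that it maps slopes near `0` at points near the origin to slopes
near `0`. -/
structure IsAdmissible (f k : ℝ × ℝ → ℝ) : Prop where
  analyticAt_f : AnalyticAt ℝ f 0
  analyticAt_k : AnalyticAt ℝ k 0
  map_f : f 0 = 0
  map_k : k 0 = 0
  partial_x_f : ∂x f 0 ≠ 0
  partial_x_k : ∂x k 0 = 0
  partial_y_k : ∂y k 0 ≠ 0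

theorem analyticAt_totalDeriv {z : ℝ × ℝ × ℝ} (hk : AnalyticAt ℝ k (z.1, z.2.1)) :
    AnalyticAt ℝ (totalDeriv k) z := by
  have hpartial (v : ℝ × ℝ) : AnalyticAt ℝ (fun z : ℝ × ℝ × ℝ => dirDeriv v k (z.1, z.2.1)) z :=
    (analyticAt_dirDeriv hk v).comp₂ (by fun_prop) (by fun_prop)
  exact (hpartial _).add ((hpartial _).mul (by fun_prop))

theorem analyticAt_totalDeriv₂ {z : ℝ × ℝ × ℝ} (hk : AnalyticAt ℝ k (z.1, z.2.1)) :
    AnalyticAt ℝ (totalDeriv₂ k) z := by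
  have hpartial (v w : ℝ × ℝ) :
      AnalyticAt ℝ (fun z : ℝ × ℝ × ℝ => dirDeriv v (dirDeriv w k) (z.1, z.2.1)) z :=
    (analyticAt_dirDeriv (analyticAt_dirDeriv hk w) v).comp₂ (by fun_prop) (by fun_prop)
  exact ((hpartial _ _).add ((analyticAt_const.mul (hpartial _ _)).mul (by fun_prop))).add
    ((hpartial _ _).mul (by fun_prop))

namespace IsAdmissible

theorem map_pair (h : IsAdmissible f k) : (f 0, k 0) = (0 : ℝ × ℝ) := by
  rw [h.map_f, h.map_k, Prod.mk_zero_zero]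

theorem jacobian_ne_zero (h : IsAdmissible f k) : jacobian f k 0 ≠ 0 := by
  simp [jacobian, h.partial_x_k, h.partial_x_f, h.partial_y_k]

theorem comp (h : IsAdmissible f k) (h' : IsAdmissible f' k') :
    IsAdmissible (fun q => f (f' q, k' q)) (fun q => k (f' q, k' q)) := by
  have hf : AnalyticAt ℝ f (f' 0, k' 0) := by rw [h'.map_pair]; exact h.analyticAt_f
  have hk : AnalyticAt ℝ k (f' 0, k' 0) := by rw [h'.map_pair]; exact h.analyticAt_k
  refine ⟨hf.comp₂ h'.analyticAt_f h'.analyticAt_k, hk.comp₂ h'.analyticAt_f h'.analyticAt_k,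
    ?_, ?_, ?_, ?_, ?_⟩
  · rw [h'.map_pair, h.map_f]
  · rw [h'.map_pair, h.map_k]
  · rw [dirDeriv_comp₂ hf h'.analyticAt_f h'.analyticAt_k, h'.map_pair, h'.partial_x_k]
    simp [h.partial_x_f, h'.partial_x_f]
  · rw [dirDeriv_comp₂ hk h'.analyticAt_f h'.analyticAt_k, h'.map_pair, h.partial_x_k,
      h'.partial_x_k]
    simp
  · rw [dirDeriv_comp₂ hk h'.analyticAt_f h'.analyticAt_k, h'.map_pair, h.partial_x_k]
    simp [h.partial_y_k, h'.partial_y_k]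

theorem totalDeriv_ne_zero (h : IsAdmissible f k) : totalDeriv f 0 ≠ 0 := by
  simpa [totalDeriv, Prod.mk_zero_zero] using h.partial_x_f

theorem prolong_zero (h : IsAdmissible f k) : prolong f k 0 = 0 := by
  simp [prolong, totalDeriv, Prod.mk_zero_zero, h.map_f, h.map_k, h.partial_x_k]

theorem analyticAt_prolong (h : IsAdmissible f k) : AnalyticAt ℝ (prolong f k) 0 :=
  AnalyticAt.prod (AnalyticAt.comp₂ (h := f) h.analyticAt_f (by fun_prop) (by fun_prop))
    (AnalyticAt.prod (AnalyticAt.comp₂ (h := k) h.analyticAt_k (by fun_prop) (by fun_prop))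
      ((analyticAt_totalDeriv h.analyticAt_k).div (analyticAt_totalDeriv h.analyticAt_f)
        h.totalDeriv_ne_zero))

theorem tendsto_prolong (h : IsAdmissible f k) : Tendsto (prolong f k) (𝓝 0) (𝓝 0) := by
  simpa only [h.prolong_zero] using h.analyticAt_prolong.continuousAt.tendsto

theorem analyticAt_pullback (h : IsAdmissible f k) (hB : AnalyticAt ℝ B 0) :
    AnalyticAt ℝ (pullback B f k) 0 := by
  have hBprolong : AnalyticAt ℝ (fun z => B (prolong f k z)) 0 :=
    AnalyticAt.comp_of_eq (g := B) hB h.analyticAt_prolong h.prolong_zero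
  have hjac : AnalyticAt ℝ (fun z : ℝ × ℝ × ℝ => jacobian f k (z.1, z.2.1)) 0 := by
    have hf := h.analyticAt_f
    have hk := h.analyticAt_k
    refine AnalyticAt.comp₂ (h := jacobian f k) ?_ analyticAt_fst (by fun_prop)
    change AnalyticAt ℝ (fun q => ∂x f q * ∂y k q - ∂y f q * ∂x k q) 0
    fun_prop
  have hDf := analyticAt_totalDeriv (z := 0) h.analyticAt_f
  have hDk := analyticAt_totalDeriv (z := 0) h.analyticAt_k
  exact ((((hDf.pow 3).mul hBprolong).sub ((analyticAt_totalDeriv₂ h.analyticAt_k).mul hDf)).add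
    (hDk.mul (analyticAt_totalDeriv₂ h.analyticAt_f))).div hjac h.jacobian_ne_zero

theorem eventually_jacobian_ne_zero (h : IsAdmissible f k) :
    ∀ᶠ q in 𝓝 (0 : ℝ × ℝ), jacobian f k q ≠ 0 := by
  have hf := h.analyticAt_f
  have hk := h.analyticAt_k
  have hjac : AnalyticAt ℝ (fun q => ∂x f q * ∂y k q - ∂y f q * ∂x k q) 0 := by fun_prop
  exact hjac.continuousAt.eventually_ne h.jacobian_ne_zero

end IsAdmissible

/-- The equation `y'' = B'(x, y, y')` is obtained from `y'' = B(x, y, y')` by a point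
transformation which is admissible in the direction from the new variables to the old ones. -/
def IsPointTransform (B B' : ℝ × ℝ × ℝ → ℝ) : Prop :=
  ∃ f k, IsAdmissible f k ∧ B' =ᶠ[𝓝 0] pullback B f k

theorem tendsto_base_point : Tendsto (fun z : ℝ × ℝ × ℝ => (z.1, z.2.1)) (𝓝 0) (𝓝 0) :=
  Continuous.tendsto (f := fun z : ℝ × ℝ × ℝ => (z.1, z.2.1)) (by fun_prop) 0

theorem IsPointTransform.trans (h : IsPointTransform B B') (h' : IsPointTransform B' B'') :
    IsPointTransform B B'' := by
  obtain ⟨f, k, hfk, hB'⟩ := h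
  obtain ⟨f', k', hfk', hB''⟩ := h'
  refine ⟨_, _, hfk.comp hfk', ?_⟩
  have hmap : Tendsto (fun z : ℝ × ℝ × ℝ => (f' (z.1, z.2.1), k' (z.1, z.2.1))) (𝓝 0) (𝓝 0) := by
    rw [← hfk'.map_pair]
    exact (hfk'.analyticAt_f.continuousAt.prodMk hfk'.analyticAt_k.continuousAt).tendsto.comp
      tendsto_base_point
  filter_upwards [hB'', hfk'.tendsto_prolong.eventually hB',
    hmap.eventually hfk.analyticAt_f.eventually_analyticAt,
    hmap.eventually hfk.analyticAt_k.eventually_analyticAt,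
    tendsto_base_point.eventually hfk'.analyticAt_f.eventually_analyticAt,
    tendsto_base_point.eventually hfk'.analyticAt_k.eventually_analyticAt,
    (analyticAt_totalDeriv (z := 0) hfk'.analyticAt_f).continuousAt.eventually_ne
      hfk'.totalDeriv_ne_zero,
    hmap.eventually hfk.eventually_jacobian_ne_zero,
    tendsto_base_point.eventually hfk'.eventually_jacobian_ne_zero]
    with z hz hB'z hf hk hf' hk' hD hJ hJ'
  rw [← pullback_comp hf hk hf' hk' hD hJ hJ', hz, pullback, hB'z]
  rfl

end Admissible

section TaylorCoefficient

variable {B B' : ℝ × ℝ × ℝ → ℝ} {f k : ℝ × ℝ → ℝ} {z : ℝ × ℝ × ℝ} {x y p : ℝ} {q : ℝ × ℝ}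

/-- The coefficient of `hʲ` in the Taylor expansion of `B (x, y, p + h)` at `h = 0`, as a function
of `(x, y, p)`. -/
noncomputable def pCoeff (j : ℕ) (B : ℝ × ℝ × ℝ → ℝ) (z : ℝ × ℝ × ℝ) : ℝ :=
  (∂₃^[j] B) z / j.factorial

/-- The coefficient of `pʲ` in the Taylor expansion of `B (x, y, p)` at `p = 0`, as a function of
`(x, y)`. -/
noncomputable def coeff (j : ℕ) (B : ℝ × ℝ × ℝ → ℝ) (q : ℝ × ℝ) : ℝ :=
  pCoeff j B (q.1, q.2, 0)

theorem pCoeff_zero (B : ℝ × ℝ × ℝ → ℝ) : pCoeff 0 B = B := by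
  funext z
  simp [pCoeff]

@[fun_prop]
theorem analyticAt_pCoeff (hB : AnalyticAt ℝ B z) (j : ℕ) : AnalyticAt ℝ (pCoeff j B) z := by
  have hiter : AnalyticAt ℝ (∂₃^[j] B) z := by
    induction j with
    | zero => exact hB
    | succ j ih =>
      rw [Function.iterate_succ_apply']
      exact analyticAt_dirDeriv ih _
  exact hiter.div analyticAt_const (by positivity)

theorem analyticAt_coeff (hB : AnalyticAt ℝ B (q.1, q.2, 0)) (j : ℕ) :
    AnalyticAt ℝ (coeff j B) q :=
  AnalyticAt.comp (g := pCoeff j B) (f := fun q : ℝ × ℝ => (q.1, q.2, (0 : ℝ)))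
    (analyticAt_pCoeff hB j) (by fun_prop)

theorem coeff_eventuallyEq (h : B =ᶠ[𝓝 0] B') (j : ℕ) : coeff j B =ᶠ[𝓝 0] coeff j B' := by
  have hiter : ∂₃^[j] B =ᶠ[𝓝 0] ∂₃^[j] B' := by
    induction j with
    | zero => exact h
    | succ j ih =>
      rw [Function.iterate_succ_apply', Function.iterate_succ_apply']
      exact dirDeriv_eventuallyEq ih _
  have hincl : Tendsto (fun q : ℝ × ℝ => (q.1, q.2, (0 : ℝ))) (𝓝 0) (𝓝 0) :=
    Continuous.tendsto (f := fun q : ℝ × ℝ => (q.1, q.2, (0 : ℝ))) (by fun_prop) 0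
  filter_upwards [hincl.eventually hiter] with q hq
  rw [coeff, coeff, pCoeff, pCoeff, hq]

theorem dirDeriv_pCoeff (hB : AnalyticAt ℝ B z) (j : ℕ) :
    ∂₃ (pCoeff j B) z = (j + 1) * pCoeff (j + 1) B z := by
  have hdiff : DifferentiableAt ℝ (∂₃^[j] B) z := by
    have := ((analyticAt_pCoeff hB j).const_smul (c := (j.factorial : ℝ))).differentiableAt
    refine this.congr_of_eventuallyEq (Eventually.of_forall fun z => ?_)
    simp [pCoeff, mul_div_cancel₀, Nat.factorial_ne_zero]
  have hfactor : pCoeff j B = fun z => (j.factorial : ℝ)⁻¹ • (∂₃^[j] B) z := by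
    funext z
    rw [pCoeff, smul_eq_mul, div_eq_inv_mul]
  rw [hfactor, dirDeriv, fderiv_fun_const_smul hdiff, pCoeff, Function.iterate_succ_apply',
    Nat.factorial_succ]
  simp only [dirDeriv, smul_apply, smul_eq_mul]
  push_cast
  field_simp

theorem hasDerivAt_pCoeff (hB : AnalyticAt ℝ B (x, y, p)) (j : ℕ) :
    HasDerivAt (fun s => pCoeff j B (x, y, s)) ((j + 1) * pCoeff (j + 1) B (x, y, p)) p := by
  have h := hasDerivAt_comp₃ (analyticAt_pCoeff hB j) (hasDerivAt_const p x) (hasDerivAt_const p y)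
    (hasDerivAt_id' p)
  simpa only [dirDeriv_pCoeff hB, mul_zero, zero_add, mul_one] using h

theorem eventually_hasDerivAt_pCoeff (hB : AnalyticAt ℝ B (x, y, p)) (j : ℕ) :
    ∀ᶠ s in 𝓝 p, HasDerivAt (fun s => pCoeff j B (x, y, s))
      ((j + 1) * pCoeff (j + 1) B (x, y, s)) s := by
  have hline : ContinuousAt (fun s : ℝ => (x, y, s)) p := by fun_prop
  exact (hline.eventually hB.eventually_analyticAt).mono fun s hs => hasDerivAt_pCoeff hs j

theorem iteratedDeriv_slice (hB : AnalyticAt ℝ B (x, y, p)) (j : ℕ) :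
    iteratedDeriv j (fun s => B (x, y, s)) p = j.factorial * pCoeff j B (x, y, p) := by
  suffices h : ∀ᶠ s in 𝓝 p, iteratedDeriv j (fun s => B (x, y, s)) s =
      j.factorial * pCoeff j B (x, y, s) from h.self_of_nhds
  induction j with
  | zero => exact Eventually.of_forall fun s => by simp [pCoeff_zero]
  | succ j ih =>
    filter_upwards [ih.eventually_nhds, eventually_hasDerivAt_pCoeff hB j] with s hs hderiv
    rw [iteratedDeriv_succ, EventuallyEq.deriv_eq hs, (hderiv.const_mul _).deriv,
      Nat.factorial_succ]
    push_cast
    ring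

end TaylorCoefficient

section ProjectiveSubstitution

variable {g h : ℕ → ℝ → ℝ} {a b m n J P c₀ c₁ c₂ c₃ : ℝ}

theorem hasDerivAt_affine (a b t : ℝ) : HasDerivAt (fun s => a + b * s) b t :=
  (hasJet2At_affine a b t).hasDerivAt

theorem hasDerivAt_zpow_mul_projective {G : ℝ → ℝ} {G' : ℝ} (hD : a + b * P ≠ 0)
    (hG : HasDerivAt G G' ((m + n * P) / (a + b * P))) (i : ℤ) :
    HasDerivAt (fun P => (a + b * P) ^ i * G ((m + n * P) / (a + b * P)))
      (i * b * (a + b * P) ^ (i - 1) * G ((m + n * P) / (a + b * P)) +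
        (a * n - b * m) * (a + b * P) ^ (i - 2) * G') P := by
  have hlin := hasDerivAt_affine a b P
  have hquot := (hasDerivAt_affine m n P).div hlin hD
  convert! ((hasDerivAt_zpow i _ (Or.inl hD)).comp P hlin).mul (hG.comp P hquot) using 1
  rw [zpow_sub₀ hD i 2]
  simp only [Function.comp_apply, Pi.div_apply]
  field_simp
  ring

/-- The functions `g j` are the Taylor coefficients, with moving base point near `p`, of the
function `g 0`. -/
def IsTaylorFamily (g : ℕ → ℝ → ℝ) (p : ℝ) : Prop :=
  ∀ j, ∀ᶠ s in 𝓝 p, HasDerivAt (g j) ((j + 1) * g (j + 1) s) s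

theorem IsTaylorFamily.hasDerivAt_projective (hg : IsTaylorFamily g (m / a)) (ha : a ≠ 0)
    (i : ℤ) (j : ℕ) : ∀ᶠ P in 𝓝 0,
      HasDerivAt (fun P => (a + b * P) ^ i * g j ((m + n * P) / (a + b * P)))
        (i * b * (a + b * P) ^ (i - 1) * g j ((m + n * P) / (a + b * P)) +
          (a * n - b * m) * (a + b * P) ^ (i - 2) *
            ((j + 1) * g (j + 1) ((m + n * P) / (a + b * P)))) P := by
  have hD : ∀ᶠ P in 𝓝 0, a + b * P ≠ 0 :=
    (hasDerivAt_affine a b 0).continuousAt.eventually_ne (by simpa using ha)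
  have hslope : ContinuousAt (fun P => (m + n * P) / (a + b * P)) 0 :=
    ContinuousAt.div (by fun_prop) (by fun_prop) (by simpa using ha)
  rw [ContinuousAt, mul_zero, mul_zero, add_zero, add_zero] at hslope
  filter_upwards [hD, hslope.eventually (hg j)] with P hDP hgP
  exact hasDerivAt_zpow_mul_projective hDP hgP i

theorem IsTaylorFamily.projective_one (hg : IsTaylorFamily g (m / a)) (hh : IsTaylorFamily h 0)
    (ha : a ≠ 0) (hgh : ∀ᶠ P in 𝓝 0, J * h 0 P =
      (a + b * P) ^ (3 : ℤ) * g 0 ((m + n * P) / (a + b * P)) +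
      (c₀ + c₁ * P + c₂ * P ^ 2 + c₃ * P ^ 3)) :
    ∀ᶠ P in 𝓝 0, J * h 1 P =
      3 * b * ((a + b * P) ^ (2 : ℤ) * g 0 ((m + n * P) / (a + b * P))) +
      (a * n - b * m) * ((a + b * P) ^ (1 : ℤ) * g 1 ((m + n * P) / (a + b * P))) +
      (c₁ + 2 * c₂ * P + 3 * c₃ * P ^ 2) := by
  filter_upwards [hgh.eventually_nhds, hh 0, hg.hasDerivAt_projective ha 3 0] with P hghP hhP hgP
  have hR := hgP.add (((hasDerivAt_affine c₀ c₁ P).add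
    ((hasDerivAt_pow 2 P).const_mul c₂)).add ((hasDerivAt_pow 3 P).const_mul c₃))
  have := (hhP.const_mul J).unique (hR.congr_of_eventuallyEq hghP)
  norm_num at this ⊢
  linear_combination this

theorem IsTaylorFamily.projective_two (hg : IsTaylorFamily g (m / a)) (hh : IsTaylorFamily h 0)
    (ha : a ≠ 0) (hgh : ∀ᶠ P in 𝓝 0, J * h 1 P =
      3 * b * ((a + b * P) ^ (2 : ℤ) * g 0 ((m + n * P) / (a + b * P))) +
      (a * n - b * m) * ((a + b * P) ^ (1 : ℤ) * g 1 ((m + n * P) / (a + b * P))) +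
      (c₁ + 2 * c₂ * P + 3 * c₃ * P ^ 2)) :
    ∀ᶠ P in 𝓝 0, J * h 2 P =
      3 * b ^ 2 * ((a + b * P) ^ (1 : ℤ) * g 0 ((m + n * P) / (a + b * P))) +
      2 * b * (a * n - b * m) * ((a + b * P) ^ (0 : ℤ) * g 1 ((m + n * P) / (a + b * P))) +
      (a * n - b * m) ^ 2 * ((a + b * P) ^ (-1 : ℤ) * g 2 ((m + n * P) / (a + b * P))) +
      (c₂ + 3 * c₃ * P) := by
  filter_upwards [hgh.eventually_nhds, hh 1, hg.hasDerivAt_projective ha 2 0,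
    hg.hasDerivAt_projective ha 1 1] with P hghP hhP hg₀P hg₁P
  have hR := ((hg₀P.const_mul (3 * b)).add (hg₁P.const_mul (a * n - b * m))).add
    ((hasDerivAt_affine c₁ (2 * c₂) P).add ((hasDerivAt_pow 2 P).const_mul (3 * c₃)))
  have := (hhP.const_mul J).unique (hR.congr_of_eventuallyEq hghP)
  norm_num at this ⊢
  linear_combination this / 2

theorem IsTaylorFamily.projective_three (hg : IsTaylorFamily g (m / a)) (hh : IsTaylorFamily h 0)
    (ha : a ≠ 0) (hgh : ∀ᶠ P in 𝓝 0, J * h 2 P =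
      3 * b ^ 2 * ((a + b * P) ^ (1 : ℤ) * g 0 ((m + n * P) / (a + b * P))) +
      2 * b * (a * n - b * m) * ((a + b * P) ^ (0 : ℤ) * g 1 ((m + n * P) / (a + b * P))) +
      (a * n - b * m) ^ 2 * ((a + b * P) ^ (-1 : ℤ) * g 2 ((m + n * P) / (a + b * P))) +
      (c₂ + 3 * c₃ * P)) :
    J * h 3 0 = b ^ 3 * g 0 (m / a) + b ^ 2 * ((a * n - b * m) / a) * g 1 (m / a) +
      b * ((a * n - b * m) / a) ^ 2 * g 2 (m / a) + ((a * n - b * m) / a) ^ 3 * g 3 (m / a) +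
      c₃ := by
  have hderiv (i : ℤ) (j : ℕ) :=
    (hg.hasDerivAt_projective (b := b) (n := n) ha i j).self_of_nhds
  have hR := ((((hderiv 1 0).const_mul (3 * b ^ 2)).add
    ((hderiv 0 1).const_mul (2 * b * (a * n - b * m)))).add
    ((hderiv (-1) 2).const_mul ((a * n - b * m) ^ 2))).add
    (hasDerivAt_affine c₂ (3 * c₃) 0)
  have := ((hh 2).self_of_nhds.const_mul J).unique (hR.congr_of_eventuallyEq hgh)
  norm_num at this ⊢
  field_simp at this ⊢
  linear_combination this / 3

end ProjectiveSubstitution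

section PullbackCoefficient

variable {B : ℝ × ℝ × ℝ → ℝ} {f k : ℝ × ℝ → ℝ} {x y p : ℝ} {q : ℝ × ℝ}

theorem isTaylorFamily_pCoeff (hB : AnalyticAt ℝ B (x, y, p)) :
    IsTaylorFamily (fun j s => pCoeff j B (x, y, s)) p :=
  eventually_hasDerivAt_pCoeff hB

/-- The values at `q` of the first four coefficients of the transformed equation `pullback B f k`
in terms of the derivatives of `f` and `k` and the Taylor coefficients of `B` at slope `k_x / f_x`,
which is the image of slope `0`. -/
structure HasPullbackCoeffs (B : ℝ × ℝ × ℝ → ℝ) (f k : ℝ × ℝ → ℝ) (q : ℝ × ℝ) : Prop where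
  coeff_zero : jacobian f k q * coeff 0 (pullback B f k) q =
    ∂x f q ^ 3 * B (f q, k q, ∂x k q / ∂x f q) - ∂x (∂x k) q * ∂x f q + ∂x k q * ∂x (∂x f) q
  coeff_one : jacobian f k q * coeff 1 (pullback B f k) q =
    3 * ∂x f q ^ 2 * ∂y f q * B (f q, k q, ∂x k q / ∂x f q) +
      ∂x f q * jacobian f k q * pCoeff 1 B (f q, k q, ∂x k q / ∂x f q) -
      ∂x (∂x k) q * ∂y f q - 2 * ∂x (∂y k) q * ∂x f q +
      ∂y k q * ∂x (∂x f) q + 2 * ∂x k q * ∂x (∂y f) q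
  coeff_two : jacobian f k q * coeff 2 (pullback B f k) q =
    3 * ∂x f q * ∂y f q ^ 2 * B (f q, k q, ∂x k q / ∂x f q) +
      2 * ∂y f q * jacobian f k q * pCoeff 1 B (f q, k q, ∂x k q / ∂x f q) +
      jacobian f k q ^ 2 / ∂x f q * pCoeff 2 B (f q, k q, ∂x k q / ∂x f q) -
      2 * ∂x (∂y k) q * ∂y f q - ∂y (∂y k) q * ∂x f q +
      2 * ∂y k q * ∂x (∂y f) q + ∂x k q * ∂y (∂y f) q
  coeff_three : jacobian f k q * coeff 3 (pullback B f k) q =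
    ∂y f q ^ 3 * B (f q, k q, ∂x k q / ∂x f q) +
      ∂y f q ^ 2 * (jacobian f k q / ∂x f q) * pCoeff 1 B (f q, k q, ∂x k q / ∂x f q) +
      ∂y f q * (jacobian f k q / ∂x f q) ^ 2 * pCoeff 2 B (f q, k q, ∂x k q / ∂x f q) +
      (jacobian f k q / ∂x f q) ^ 3 * pCoeff 3 B (f q, k q, ∂x k q / ∂x f q) -
      ∂y (∂y k) q * ∂y f q + ∂y k q * ∂y (∂y f) q

theorem hasPullbackCoeffs (hB : AnalyticAt ℝ B (f q, k q, ∂x k q / ∂x f q))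
    (hB' : AnalyticAt ℝ (pullback B f k) (q.1, q.2, 0)) (hf : ∂x f q ≠ 0)
    (hJ : jacobian f k q ≠ 0) : HasPullbackCoeffs B f k q := by
  have hg := isTaylorFamily_pCoeff hB
  have hh := isTaylorFamily_pCoeff hB'
  have h₀ : ∀ᶠ P in 𝓝 (0 : ℝ), jacobian f k q * pCoeff 0 (pullback B f k) (q.1, q.2, P) =
      (∂x f q + ∂y f q * P) ^ (3 : ℤ) *
        pCoeff 0 B (f q, k q, (∂x k q + ∂y k q * P) / (∂x f q + ∂y f q * P)) +
      ((∂x k q * ∂x (∂x f) q - ∂x (∂x k) q * ∂x f q) +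
        (∂y k q * ∂x (∂x f) q + 2 * ∂x k q * ∂x (∂y f) q -
          ∂x (∂x k) q * ∂y f q - 2 * ∂x (∂y k) q * ∂x f q) * P +
        (2 * ∂y k q * ∂x (∂y f) q + ∂x k q * ∂y (∂y f) q -
          2 * ∂x (∂y k) q * ∂y f q - ∂y (∂y k) q * ∂x f q) * P ^ 2 +
        (∂y k q * ∂y (∂y f) q - ∂y (∂y k) q * ∂y f q) * P ^ 3) := by
    refine Eventually.of_forall fun P => ?_
    rw [pCoeff_zero, pCoeff_zero, jacobian_mul_pullback (z := (q.1, q.2, P)) hJ]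
    simp only [totalDeriv, totalDeriv₂, prolong, zpow_ofNat]
    ring
  have h₁ := hg.projective_one hh hf h₀
  have h₂ := hg.projective_two hh hf h₁
  refine ⟨?_, ?_, ?_, ?_⟩
  · have := h₀.self_of_nhds
    norm_num [pCoeff_zero] at this
    rw [coeff, pCoeff_zero]
    linear_combination this
  · have := h₁.self_of_nhds
    norm_num [pCoeff_zero] at this
    rw [coeff, jacobian] at *
    linear_combination this
  · have := h₂.self_of_nhds
    norm_num [pCoeff_zero] at this
    rw [coeff, jacobian] at *
    linear_combination this
  · have := hg.projective_three hh hf h₂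
    norm_num [pCoeff_zero] at this
    rw [coeff, jacobian] at *
    linear_combination this

theorem IsAdmissible.eventually_hasPullbackCoeffs (h : IsAdmissible f k) (hB : AnalyticAt ℝ B 0) :
    ∀ᶠ q in 𝓝 0, HasPullbackCoeffs B f k q := by
  have hincl : Tendsto (fun q : ℝ × ℝ => (q.1, q.2, (0 : ℝ))) (𝓝 0) (𝓝 0) :=
    Continuous.tendsto (f := fun q : ℝ × ℝ => (q.1, q.2, (0 : ℝ))) (by fun_prop) 0
  have hprolong := h.tendsto_prolong.comp hincl
  simp only [Function.comp_def, prolong, totalDeriv, mul_zero, add_zero] at hprolong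
  filter_upwards [hprolong.eventually hB.eventually_analyticAt,
    hincl.eventually (h.analyticAt_pullback hB).eventually_analyticAt,
    (analyticAt_dirDeriv h.analyticAt_f _).continuousAt.eventually_ne h.partial_x_f,
    h.eventually_jacobian_ne_zero] with q hBq hB'q hfq hJq
  exact hasPullbackCoeffs hBq hB'q hfq hJq

end PullbackCoefficient

theorem IsAdmissible.isPointTransform {B : ℝ × ℝ × ℝ → ℝ} {f k : ℝ × ℝ → ℝ}
    (h : IsAdmissible f k) : IsPointTransform B (pullback B f k) :=
  ⟨f, k, h, .rfl⟩

theorem IsPointTransform.analyticAt {B B' : ℝ × ℝ × ℝ → ℝ} (h : IsPointTransform B B')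
    (hB : AnalyticAt ℝ B 0) : AnalyticAt ℝ B' 0 := by
  obtain ⟨f, k, hfk, hB'⟩ := h
  exact (hfk.analyticAt_pullback hB).congr hB'.symm

section Axis

variable {k : ℝ × ℝ → ℝ} {a : ℝ → ℝ}

theorem eventually_axis {p : ℝ × ℝ → Prop} (h : ∀ᶠ q in 𝓝 0, p q) :
    ∀ᶠ Y in 𝓝 0, p (0, Y) :=
  (Continuous.prodMk_right (0 : ℝ)).continuousAt.eventually h

theorem eventually_axis_horizontal {p : ℝ × ℝ × ℝ → Prop} (h : ∀ᶠ z in 𝓝 0, p z) :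
    ∀ᶠ Y in 𝓝 0, p (0, Y, 0) :=
  (Continuous.tendsto (f := fun Y : ℝ => ((0 : ℝ), Y, (0 : ℝ))) (by fun_prop) 0).eventually h

theorem partial_y_axis (hk : AnalyticAt ℝ k 0) (h : ∀ᶠ Y in 𝓝 0, k (0, Y) = a Y) :
    ∀ᶠ Y in 𝓝 0, ∂y k (0, Y) = deriv a Y := by
  filter_upwards [EventuallyEq.eventuallyEq_nhds (f := fun Y => k (0, Y)) (g := a) h,
    eventually_axis hk.eventually_analyticAt] with Y hY hkY
  exact (hasDerivAt_line_y hkY).deriv.symm.trans hY.deriv_eq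

theorem partial_x_partial_y_axis (hk : AnalyticAt ℝ k 0) (h : ∀ᶠ Y in 𝓝 0, ∂x k (0, Y) = a Y) :
    ∀ᶠ Y in 𝓝 0, ∂x (∂y k) (0, Y) = deriv a Y := by
  filter_upwards [partial_y_axis (analyticAt_dirDeriv hk _) h,
    eventually_axis hk.eventually_analyticAt] with Y hY hkY
  rw [dirDeriv_comm hkY, hY]

end Axis

section Projection

theorem dirDeriv_fst (v : ℝ × ℝ) : dirDeriv v (Prod.fst : ℝ × ℝ → ℝ) = fun _ => v.1 := by
  funext q
  simp [dirDeriv, fderiv_fst]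

theorem dirDeriv_snd (v : ℝ × ℝ) : dirDeriv v (Prod.snd : ℝ × ℝ → ℝ) = fun _ => v.2 := by
  funext q
  simp [dirDeriv, fderiv_snd]

theorem dirDeriv_const (v : ℝ × ℝ) (c : ℝ) : dirDeriv v (fun _ : ℝ × ℝ => c) = fun _ => 0 := by
  funext q
  simp [dirDeriv]

end Projection

section Straightening

variable {B : ℝ × ℝ × ℝ → ℝ} {k : ℝ × ℝ → ℝ} {q : ℝ × ℝ}

/-- The conditions on the equation `y'' = B(x, y, y')` along the axis `x = 0` which express that
this axis, with the horizontal direction at each of its points, is a chain. -/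
def IsChainAdapted (B : ℝ × ℝ × ℝ → ℝ) : Prop :=
  ∀ᶠ Y in 𝓝 0, coeff 3 B (0, Y) = 0 ∧ ∂x (coeff 2 B) (0, Y) = 2 * ∂y (coeff 1 B) (0, Y)

theorem HasPullbackCoeffs.fst (h : HasPullbackCoeffs B Prod.fst k q) :
    ∂y k q * coeff 0 (pullback B Prod.fst k) q = B (q.1, k q, ∂x k q) - ∂x (∂x k) q ∧
      ∂y k q * coeff 1 (pullback B Prod.fst k) q =
        ∂y k q * pCoeff 1 B (q.1, k q, ∂x k q) - 2 * ∂x (∂y k) q ∧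
      ∂y k q * coeff 2 (pullback B Prod.fst k) q =
        ∂y k q ^ 2 * pCoeff 2 B (q.1, k q, ∂x k q) - ∂y (∂y k) q ∧
      ∂y k q * coeff 3 (pullback B Prod.fst k) q = ∂y k q ^ 3 * pCoeff 3 B (q.1, k q, ∂x k q) := by
  obtain ⟨h₀, h₁, h₂, h₃⟩ := h
  simp only [jacobian, dirDeriv_fst, dirDeriv_const, div_one] at h₀ h₁ h₂ h₃
  exact ⟨by linear_combination h₀, by linear_combination h₁, by linear_combination h₂,
    by linear_combination h₃⟩

theorem isAdmissible_fst (hk : AnalyticAt ℝ k 0) (hk₀ : ∀ᶠ Y in 𝓝 0, k (0, Y) = Y)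
    (hk₁ : ∀ᶠ Y in 𝓝 0, ∂x k (0, Y) = 0) : IsAdmissible Prod.fst k where
  analyticAt_f := analyticAt_fst
  analyticAt_k := hk
  map_f := rfl
  map_k := hk₀.self_of_nhds
  partial_x_f := by simp [dirDeriv_fst]
  partial_x_k := hk₁.self_of_nhds
  partial_y_k := by
    have h := (partial_y_axis hk hk₀).self_of_nhds
    rw [deriv_id''] at h
    exact h.trans_ne one_ne_zero

theorem partial_x_coeff (hB : AnalyticAt ℝ B (q.1, q.2, 0)) (j : ℕ) :
    ∂x (coeff j B) q = ∂₁ (pCoeff j B) (q.1, q.2, 0) := by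
  have h := hasDerivAt_comp₃ (analyticAt_pCoeff hB j) (hasDerivAt_id' q.1)
    (hasDerivAt_const q.1 q.2) (hasDerivAt_const q.1 0)
  simp only [mul_one, mul_zero, add_zero] at h
  exact (hasDerivAt_line_x (analyticAt_coeff hB j)).unique h

theorem partial_x_coeff_two_pullback_fst {Y : ℝ} (hB : AnalyticAt ℝ B (0, Y, 0))
    (hB' : AnalyticAt ℝ (pullback B Prod.fst k) (0, Y, 0)) (hk : AnalyticAt ℝ k (0, Y))
    (hcoeffs : ∀ᶠ q in 𝓝 (0, Y), HasPullbackCoeffs B Prod.fst k q) (hk₀ : k (0, Y) = Y)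
    (hk_x : ∂x k (0, Y) = 0) (hk_y : ∂y k (0, Y) = 1) (hk_xy : ∂x (∂y k) (0, Y) = 0)
    (hk_xyy : ∂x (∂y (∂y k)) (0, Y) = 0) (hcoeff : coeff 3 B (0, Y) = 0) :
    ∂x (coeff 2 (pullback B Prod.fst k)) (0, Y) = ∂x (coeff 2 B) (0, Y) := by
  have hleft := (hasDerivAt_line_x (analyticAt_dirDeriv hk (0, 1))).mul
    (hasDerivAt_line_x (q := (0, Y)) (analyticAt_coeff hB' 2))
  have hB₂ := hasDerivAt_comp₃ (B := pCoeff 2 B) (X := fun t => t) (Y := fun t => k (t, Y))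
    (P := fun t => ∂x k (t, Y)) (t := 0) (by rw [hk₀, hk_x]; exact analyticAt_pCoeff hB 2)
    (hasDerivAt_id' 0) (hasDerivAt_line_x hk) (hasDerivAt_line_x (analyticAt_dirDeriv hk (1, 0)))
  have hright := (((hasDerivAt_line_x (analyticAt_dirDeriv hk (0, 1))).pow 2).mul hB₂).sub
    (hasDerivAt_line_x (analyticAt_dirDeriv (analyticAt_dirDeriv hk (0, 1)) (0, 1)))
  have hunique := hleft.unique (hright.congr_of_eventuallyEq
    ((Continuous.prodMk_left Y).continuousAt.eventually (hcoeffs.mono fun q hq => hq.fst.2.2.1)))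
  have hp : ∂₃ (pCoeff 2 B) (0, Y, 0) = 0 := by
    rw [dirDeriv_pCoeff hB]
    exact mul_eq_zero_of_right _ hcoeff
  simp only [hk₀, hk_x, hk_y, hk_xy, hk_xyy, hp, Pi.pow_apply] at hunique
  rw [partial_x_coeff (q := (0, Y)) hB]
  linear_combination hunique

theorem IsChainAdapted.pullback_fst (hB : AnalyticAt ℝ B 0) (hchain : IsChainAdapted B)
    (hk : AnalyticAt ℝ k 0) (hk₀ : ∀ᶠ Y in 𝓝 0, k (0, Y) = Y)
    (hk₁ : ∀ᶠ Y in 𝓝 0, ∂x k (0, Y) = 0) : IsChainAdapted (pullback B Prod.fst k) := by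
  have hadm := isAdmissible_fst hk hk₀ hk₁
  have hk_y := partial_y_axis hk hk₀
  have hk_xy := partial_x_partial_y_axis hk hk₁
  have hk_xyy := partial_x_partial_y_axis (analyticAt_dirDeriv hk _) hk_xy
  simp only [deriv_id'', deriv_const'] at hk_y hk_xy hk_xyy
  have hcoeffs := hadm.eventually_hasPullbackCoeffs hB
  have hB' := hadm.analyticAt_pullback hB
  have hcoeff_one : ∀ᶠ Y in 𝓝 0, coeff 1 (pullback B Prod.fst k) (0, Y) = coeff 1 B (0, Y) := by
    filter_upwards [eventually_axis hcoeffs, hk₀, hk₁, hk_y, hk_xy] with Y hY hk₀Y hkxY hkyY hkxyY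
    have h := hY.fst.2.1
    rw [hk₀Y, hkxY, hkyY, hkxyY, one_mul, one_mul, mul_zero, sub_zero] at h
    exact h
  have hpartial_y := partial_y_axis (analyticAt_coeff hB' 1) hcoeff_one
  filter_upwards [hchain, eventually_axis hcoeffs.eventually_nhds, hk₀, hk₁, hk_y, hk_xy, hk_xyy,
    hpartial_y, eventually_axis hk.eventually_analyticAt,
    eventually_axis (analyticAt_coeff hB 1).eventually_analyticAt,
    eventually_axis_horizontal hB.eventually_analyticAt,
    eventually_axis_horizontal hB'.eventually_analyticAt]
    with Y hchainY hY hk₀Y hkxY hkyY hkxyY hkxyyY hpartialY hkY hB₁Y hBY hB'Y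
  refine ⟨?_, ?_⟩
  · have h := hY.self_of_nhds.fst.2.2.2
    rw [hk₀Y, hkxY, hkyY, one_pow, one_mul, one_mul] at h
    exact h.trans hchainY.1
  · rw [partial_x_coeff_two_pullback_fst hBY hB'Y hkY hY hk₀Y hkxY hkyY hkxyY hkxyyY hchainY.1,
      hpartialY, (hasDerivAt_line_y hB₁Y).deriv]
    exact hchainY.2

theorem exists_isPointTransform_coeff_zero (hB : AnalyticAt ℝ B 0) (hchain : IsChainAdapted B) :
    ∃ B', IsPointTransform B B' ∧ IsChainAdapted B' ∧ coeff 0 B' =ᶠ[𝓝 0] 0 := by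
  obtain ⟨k, hk, hinit, hode⟩ := exists_analyticAt_partial_x_partial_x_eq
    (F := fun z => B (z.1, z.2.2.1, z.2.2.2)) (a := fun Y => Y) (b := fun _ => 0)
    (AnalyticAt.comp (g := B) (f := fun z : ℝ × ℝ × ℝ × ℝ => (z.1, z.2.2.1, z.2.2.2)) hB
      (by fun_prop)) analyticAt_id analyticAt_const
  obtain ⟨hk₀, hk₁⟩ := eventually_and.1 hinit
  have hadm := isAdmissible_fst hk hk₀ hk₁
  refine ⟨_, hadm.isPointTransform, hchain.pullback_fst hB hk hk₀ hk₁, ?_⟩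
  filter_upwards [hadm.eventually_hasPullbackCoeffs hB, hode,
    (analyticAt_dirDeriv hk _).continuousAt.eventually_ne hadm.partial_y_k] with q hq hodeq hne
  have h := hq.fst.1
  rw [hodeq, sub_self] at h
  exact (mul_eq_zero.1 h).resolve_left hne

end Straightening

section Reparametrization

variable {B : ℝ × ℝ × ℝ → ℝ} {f : ℝ × ℝ → ℝ} {q : ℝ × ℝ} {Y : ℝ}

theorem HasPullbackCoeffs.snd (h : HasPullbackCoeffs B f Prod.snd q) (hf : ∂x f q ≠ 0)
    (hB : coeff 0 B (f q, q.2) = 0) :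
    coeff 0 (pullback B f Prod.snd) q = 0 ∧
      ∂x f q * coeff 1 (pullback B f Prod.snd) q =
        ∂x f q ^ 2 * coeff 1 B (f q, q.2) + ∂x (∂x f) q ∧
      ∂x f q * coeff 2 (pullback B f Prod.snd) q =
        2 * (∂y f q * (∂x f q * coeff 1 B (f q, q.2))) + ∂x f q * coeff 2 B (f q, q.2) +
          2 * ∂x (∂y f) q ∧
      ∂x f q * coeff 3 (pullback B f Prod.snd) q =
        ∂y f q ^ 2 * coeff 1 B (f q, q.2) + ∂y f q * coeff 2 B (f q, q.2) +
          coeff 3 B (f q, q.2) + ∂y (∂y f) q := by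
  obtain ⟨h₀, h₁, h₂, h₃⟩ := h
  rw [coeff, pCoeff_zero] at hB
  simp only [jacobian, dirDeriv_snd, dirDeriv_const, zero_div, hB, mul_one, mul_zero, sub_zero,
    div_self hf, pow_two, mul_self_div_self] at h₀ h₁ h₂ h₃
  refine ⟨(mul_eq_zero.1 ?_).resolve_left hf, ?_, ?_, ?_⟩
  · linear_combination h₀
  · rw [coeff.eq_1 1 B]
    linear_combination h₁
  · rw [coeff.eq_1 1 B, coeff.eq_1 2 B]
    linear_combination h₂
  · rw [coeff.eq_1 1 B, coeff.eq_1 2 B, coeff.eq_1 3 B]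
    linear_combination h₃

theorem isAdmissible_snd (hf : AnalyticAt ℝ f 0) (hf₀ : f 0 = 0) (hf₁ : ∂x f 0 ≠ 0) :
    IsAdmissible f Prod.snd where
  analyticAt_f := hf
  analyticAt_k := analyticAt_snd
  map_f := hf₀
  map_k := rfl
  partial_x_f := hf₁
  partial_x_k := by simp [dirDeriv_snd]
  partial_y_k := by simp [dirDeriv_snd]

theorem partial_x_partial_x_partial_y_axis {a : ℝ → ℝ} (hf : AnalyticAt ℝ f 0)
    (h : ∀ᶠ Y in 𝓝 0, ∂x (∂x f) (0, Y) = a Y) :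
    ∀ᶠ Y in 𝓝 0, ∂x (∂x (∂y f)) (0, Y) = deriv a Y := by
  have hcomm : ∂x (∂y f) =ᶠ[𝓝 0] ∂y (∂x f) :=
    hf.eventually_analyticAt.mono fun q hq => dirDeriv_comm hq _ _
  filter_upwards [partial_x_partial_y_axis (analyticAt_dirDeriv hf _) h,
    eventually_axis (dirDeriv_eventuallyEq hcomm (1, 0))] with Y hY hcommY
  exact hcommY.trans hY

theorem partial_x_coeff_two_pullback_snd (hB : AnalyticAt ℝ B (0, Y, 0))
    (hB' : AnalyticAt ℝ (pullback B f Prod.snd) (0, Y, 0)) (hf : AnalyticAt ℝ f (0, Y))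
    (hcoeff : ∀ᶠ q in 𝓝 (0, Y), ∂x f q * coeff 2 (pullback B f Prod.snd) q =
        2 * (∂y f q * (∂x f q * coeff 1 B (f q, q.2))) + ∂x f q * coeff 2 B (f q, q.2) +
          2 * ∂x (∂y f) q) (hf₀ : f (0, Y) = 0) (hf_x : ∂x f (0, Y) = 1)
    (hf_y : ∂y f (0, Y) = 0) (hf_xy : ∂x (∂y f) (0, Y) = 0) :
    ∂x (coeff 2 (pullback B f Prod.snd)) (0, Y) =
      ∂x (coeff 2 B) (0, Y) + 2 * ∂x (∂x (∂y f)) (0, Y) := by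
  have hf_x' := hasDerivAt_line_x (analyticAt_dirDeriv hf (1, 0))
  have hleft := hf_x'.mul (hasDerivAt_line_x (q := (0, Y)) (analyticAt_coeff hB' 2))
  have hcomp (j : ℕ) := hasDerivAt_comp₂ (k := coeff j B) (X := fun t => f (t, Y))
    (Y := fun _ => Y) (t := 0) (analyticAt_coeff (by rw [hf₀]; exact hB) j)
    (hasDerivAt_line_x hf) (hasDerivAt_const 0 Y)
  have hright := ((((hasDerivAt_line_x (analyticAt_dirDeriv hf (0, 1))).mul
    (hf_x'.mul (hcomp 1))).const_mul 2).add (hf_x'.mul (hcomp 2))).add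
    ((hasDerivAt_line_x (analyticAt_dirDeriv (analyticAt_dirDeriv hf (0, 1)) (1, 0))).const_mul 2)
  have hunique := hleft.unique (hright.congr_of_eventuallyEq
    ((Continuous.prodMk_left Y).continuousAt.eventually hcoeff))
  have hvalue := hcoeff.self_of_nhds
  simp only [hf₀, hf_x, hf_y, hf_xy, Pi.mul_apply] at hunique hvalue
  linear_combination hunique - ∂x (∂x f) (0, Y) * hvalue

theorem IsAdmissible.eventually_coeff_pullback_snd (h : IsAdmissible f Prod.snd)
    (hB : AnalyticAt ℝ B 0) (hB₀ : coeff 0 B =ᶠ[𝓝 0] 0) :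
    ∀ᶠ q in 𝓝 0, HasPullbackCoeffs B f Prod.snd q ∧ ∂x f q ≠ 0 ∧ coeff 0 B (f q, q.2) = 0 := by
  have hmap : Tendsto (fun q : ℝ × ℝ => (f q, q.2)) (𝓝 0) (𝓝 0) := by
    have := h.analyticAt_f.continuousAt.prodMk continuousAt_snd
    rwa [ContinuousAt, h.map_f, Prod.snd_zero, Prod.mk_zero_zero] at this
  exact (h.eventually_hasPullbackCoeffs hB).and
    (((analyticAt_dirDeriv h.analyticAt_f _).continuousAt.eventually_ne h.partial_x_f).and
      (hmap.eventually hB₀))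

theorem coeff_zero_one_pullback_snd (hadm : IsAdmissible f Prod.snd) (hB : AnalyticAt ℝ B 0)
    (hB₀ : coeff 0 B =ᶠ[𝓝 0] 0)
    (hode : ∀ᶠ q in 𝓝 0, ∂x (∂x f) q = -coeff 1 B (f q, q.2) * ∂x f q ^ 2) :
    coeff 0 (pullback B f Prod.snd) =ᶠ[𝓝 0] 0 ∧ coeff 1 (pullback B f Prod.snd) =ᶠ[𝓝 0] 0 := by
  refine eventually_and.1 ?_
  filter_upwards [hadm.eventually_coeff_pullback_snd hB hB₀, hode] with q ⟨hq, hne, hB₀q⟩ hodeq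
  obtain ⟨h₀, h₁, -⟩ := hq.snd hne hB₀q
  refine ⟨h₀, (mul_eq_zero.1 ?_).resolve_left hne⟩
  linear_combination h₁ + hodeq

theorem IsChainAdapted.pullback_snd (hB : AnalyticAt ℝ B 0) (hchain : IsChainAdapted B)
    (hB₀ : coeff 0 B =ᶠ[𝓝 0] 0) (hadm : IsAdmissible f Prod.snd)
    (hf₀ : ∀ᶠ Y in 𝓝 0, f (0, Y) = 0) (hf₁ : ∀ᶠ Y in 𝓝 0, ∂x f (0, Y) = 1)
    (hode : ∀ᶠ q in 𝓝 0, ∂x (∂x f) q = -coeff 1 B (f q, q.2) * ∂x f q ^ 2) :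
    IsChainAdapted (pullback B f Prod.snd) := by
  have hf := hadm.analyticAt_f
  have hf_y := partial_y_axis hf hf₀
  have hf_xy := partial_x_partial_y_axis hf hf₁
  simp only [deriv_const'] at hf_y hf_xy
  have hf_yy := partial_y_axis (analyticAt_dirDeriv hf _) hf_y
  have hf_xx : ∀ᶠ Y in 𝓝 0, ∂x (∂x f) (0, Y) = -coeff 1 B (0, Y) := by
    filter_upwards [eventually_axis hode, hf₀, hf₁] with Y hY hf₀Y hf₁Y
    rw [hY, hf₀Y, hf₁Y, one_pow, mul_one]
  have hf_xxy := partial_x_partial_x_partial_y_axis hf hf_xx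
  have hcoeffs := hadm.eventually_coeff_pullback_snd hB hB₀
  have hcoeff_one := (coeff_zero_one_pullback_snd hadm hB hB₀ hode).2
  have hB' := hadm.analyticAt_pullback hB
  filter_upwards [hchain, eventually_axis hcoeffs.eventually_nhds, hf₀, hf₁, hf_y, hf_xy, hf_yy,
    hf_xxy, eventually_axis (dirDeriv_eventuallyEq hcoeff_one (0, 1)),
    eventually_axis hf.eventually_analyticAt,
    eventually_axis (analyticAt_coeff hB 1).eventually_analyticAt,
    eventually_axis_horizontal hB.eventually_analyticAt,
    eventually_axis_horizontal hB'.eventually_analyticAt]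
    with Y hchainY hY hf₀Y hfxY hfyY hfxyY hfyyY hfxxyY hcoeffY hfY hB₁Y hBY hB'Y
  refine ⟨?_, ?_⟩
  · obtain ⟨hq, hne, hB₀q⟩ := hY.self_of_nhds
    have h := (hq.snd hne hB₀q).2.2.2
    simp only [hf₀Y, hfxY, hfyY, hfyyY, hchainY.1, deriv_const] at h
    linear_combination h
  · rw [partial_x_coeff_two_pullback_snd hBY hB'Y hfY (hY.mono fun q hq =>
      (hq.1.snd hq.2.1 hq.2.2).2.2.1) hf₀Y hfxY hfyY hfxyY, hcoeffY, hchainY.2, hfxxyY,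
      (hasDerivAt_line_y hB₁Y).fun_neg.deriv, Pi.zero_def, dirDeriv_const]
    ring

theorem exists_isPointTransform_coeff_one (hB : AnalyticAt ℝ B 0) (hchain : IsChainAdapted B)
    (hB₀ : coeff 0 B =ᶠ[𝓝 0] 0) :
    ∃ B', IsPointTransform B B' ∧ IsChainAdapted B' ∧ coeff 0 B' =ᶠ[𝓝 0] 0 ∧
      coeff 1 B' =ᶠ[𝓝 0] 0 := by
  have hB₁ : AnalyticAt ℝ (coeff 1 B) ((0 : ℝ), (0 : ℝ)) := analyticAt_coeff hB 1
  obtain ⟨f, hf, hinit, hode⟩ := exists_analyticAt_partial_x_partial_x_eq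
    (F := fun z => -coeff 1 B (z.2.2.1, z.2.1) * z.2.2.2 ^ 2) (a := fun _ => 0) (b := fun _ => 1)
    ((AnalyticAt.comp (g := coeff 1 B) (f := fun z : ℝ × ℝ × ℝ × ℝ => (z.2.2.1, z.2.1)) hB₁
      (by fun_prop)).neg.mul (by fun_prop))
    analyticAt_const analyticAt_const
  obtain ⟨hf₀, hf₁⟩ := eventually_and.1 hinit
  have hadm := isAdmissible_snd hf hf₀.self_of_nhds (hf₁.self_of_nhds.trans_ne one_ne_zero)
  exact ⟨_, hadm.isPointTransform, hchain.pullback_snd hB hB₀ hadm hf₀ hf₁ hode,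
    coeff_zero_one_pullback_snd hadm hB hB₀ hode⟩

end Reparametrization

section AffineInX

/-- The function `α(y) + β(y) x` on the plane. -/
def affineX (α β : ℝ → ℝ) (q : ℝ × ℝ) : ℝ :=
  α q.2 + β q.2 * q.1

variable {α β : ℝ → ℝ} {q : ℝ × ℝ}

theorem analyticAt_affineX (hα : AnalyticAt ℝ α q.2) (hβ : AnalyticAt ℝ β q.2) :
    AnalyticAt ℝ (affineX α β) q :=
  (AnalyticAt.comp (g := α) hα analyticAt_snd).add
    ((AnalyticAt.comp (g := β) hβ analyticAt_snd).mul analyticAt_fst)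

theorem eventually_analyticAt_snd (hα : AnalyticAt ℝ α q.2) :
    ∀ᶠ p : ℝ × ℝ in 𝓝 q, AnalyticAt ℝ α p.2 :=
  continuousAt_snd.eventually hα.eventually_analyticAt

theorem partial_x_affineX (hα : AnalyticAt ℝ α q.2) (hβ : AnalyticAt ℝ β q.2) :
    ∂x (affineX α β) =ᶠ[𝓝 q] affineX β fun _ => 0 := by
  filter_upwards [eventually_analyticAt_snd hα, eventually_analyticAt_snd hβ] with p hαp hβp
  refine (hasDerivAt_line_x (analyticAt_affineX hαp hβp)).unique ?_
  simpa [affineX] using ((hasDerivAt_id' p.1).const_mul (β p.2)).const_add (α p.2)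

theorem partial_y_affineX (hα : AnalyticAt ℝ α q.2) (hβ : AnalyticAt ℝ β q.2) :
    ∂y (affineX α β) =ᶠ[𝓝 q] affineX (deriv α) (deriv β) := by
  filter_upwards [eventually_analyticAt_snd hα, eventually_analyticAt_snd hβ] with p hαp hβp
  exact (hasDerivAt_line_y (analyticAt_affineX hαp hβp)).unique
    (hαp.differentiableAt.hasDerivAt.add (hβp.differentiableAt.hasDerivAt.mul_const p.1))

theorem affineX_partials (hα : AnalyticAt ℝ α q.2) (hβ : AnalyticAt ℝ β q.2) :
    ∂x (affineX α β) q = β q.2 ∧ ∂y (affineX α β) q = deriv α q.2 + deriv β q.2 * q.1 ∧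
      ∂x (∂x (affineX α β)) q = 0 ∧ ∂x (∂y (affineX α β)) q = deriv β q.2 ∧
      ∂y (∂y (affineX α β)) q = deriv (deriv α) q.2 + deriv (deriv β) q.2 * q.1 := by
  have hx := partial_x_affineX hα hβ
  have hy := partial_y_affineX hα hβ
  have hxx := (dirDeriv_eventuallyEq hx (1, 0)).trans (partial_x_affineX hβ analyticAt_const)
  have hxy := (dirDeriv_eventuallyEq hy (1, 0)).trans (partial_x_affineX hα.deriv hβ.deriv)
  have hyy := (dirDeriv_eventuallyEq hy (0, 1)).trans (partial_y_affineX hα.deriv hβ.deriv)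
  refine ⟨?_, hy.eq_of_nhds, ?_, ?_, hyy.eq_of_nhds⟩
  · simpa [affineX] using hx.eq_of_nhds
  · simpa [affineX] using hxx.eq_of_nhds
  · simpa [affineX] using hxy.eq_of_nhds

end AffineInX

section Rescaling

variable {B : ℝ × ℝ × ℝ → ℝ} {h τ : ℝ → ℝ} {q : ℝ × ℝ} {Y : ℝ}

/-- The normal form of `B`: as functions of `x`, the coefficients of `1` and `p` vanish, and the
coefficients of `p²` and `p³` vanish to second order along the axis `x = 0`. -/
structure IsNormal (B : ℝ × ℝ × ℝ → ℝ) : Prop where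
  coeff_zero : coeff 0 B =ᶠ[𝓝 0] 0
  coeff_one : coeff 1 B =ᶠ[𝓝 0] 0
  axis : ∀ᶠ Y in 𝓝 0, coeff 2 B (0, Y) = 0 ∧ coeff 3 B (0, Y) = 0 ∧
    ∂x (coeff 2 B) (0, Y) = 0 ∧ ∂x (coeff 3 B) (0, Y) = 0

/-- The equation obtained from `y'' = B(x, y, y')` by substituting `h(y) x` for `x` and `τ(y)` for
`y`. -/
noncomputable def rescale (B : ℝ × ℝ × ℝ → ℝ) (h τ : ℝ → ℝ) : ℝ × ℝ × ℝ → ℝ :=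
  pullback B (affineX (fun _ => 0) h) (affineX τ fun _ => 0)

theorem isAdmissible_rescaling (hh : AnalyticAt ℝ h 0) (hτ : AnalyticAt ℝ τ 0) (hh₀ : h 0 ≠ 0)
    (hτ₀ : τ 0 = 0) (hτ₁ : deriv τ 0 ≠ 0) :
    IsAdmissible (affineX (fun _ => 0) h) (affineX τ fun _ => 0) where
  analyticAt_f := analyticAt_affineX analyticAt_const hh
  analyticAt_k := analyticAt_affineX hτ analyticAt_const
  map_f := by simp [affineX]
  map_k := by simp [affineX, hτ₀]
  partial_x_f := (affineX_partials (q := 0) analyticAt_const hh).1.trans_ne hh₀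
  partial_x_k := (affineX_partials (q := 0) hτ analyticAt_const).1
  partial_y_k := by
    rw [(affineX_partials (q := 0) hτ analyticAt_const).2.1]
    simpa using hτ₁

theorem HasPullbackCoeffs.rescaling
    (H : HasPullbackCoeffs B (affineX (fun _ => 0) h) (affineX τ fun _ => 0) q)
    (hh : AnalyticAt ℝ h q.2) (hτ : AnalyticAt ℝ τ q.2) (hh₀ : h q.2 ≠ 0)
    (hτ₁ : deriv τ q.2 ≠ 0) (hB₀ : coeff 0 B (h q.2 * q.1, τ q.2) = 0)
    (hB₁ : coeff 1 B (h q.2 * q.1, τ q.2) = 0) :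
    coeff 0 (rescale B h τ) q = 0 ∧
      coeff 1 (rescale B h τ) q = 0 ∧
      h q.2 * deriv τ q.2 * coeff 2 (rescale B h τ) q =
        h q.2 * deriv τ q.2 ^ 2 * coeff 2 B (h q.2 * q.1, τ q.2) -
          deriv (deriv τ) q.2 * h q.2 + 2 * deriv τ q.2 * deriv h q.2 ∧
      h q.2 * deriv τ q.2 * coeff 3 (rescale B h τ) q =
        deriv τ q.2 ^ 2 * deriv h q.2 * (q.1 * coeff 2 B (h q.2 * q.1, τ q.2)) +
          deriv τ q.2 ^ 3 * coeff 3 B (h q.2 * q.1, τ q.2) +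
          (deriv τ q.2 * deriv (deriv h) q.2 - deriv (deriv τ) q.2 * deriv h q.2) * q.1 := by
  rw [rescale]
  obtain ⟨h₀, h₁, h₂, h₃⟩ := H
  obtain ⟨hf_x, hf_y, hf_xx, hf_xy, hf_yy⟩ := affineX_partials (q := q) (α := fun _ => 0)
    analyticAt_const hh
  obtain ⟨hk_x, hk_y, hk_xx, hk_xy, hk_yy⟩ := affineX_partials (q := q) (β := fun _ => 0)
    hτ analyticAt_const
  rw [coeff, pCoeff_zero] at hB₀
  rw [coeff] at hB₁
  have hJ : h q.2 * deriv τ q.2 ≠ 0 := mul_ne_zero hh₀ hτ₁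
  simp only [jacobian, hf_x, hf_y, hf_xx, hf_xy, hf_yy, hk_x, hk_y, hk_xx, hk_xy, hk_yy,
    deriv_const', zero_add, zero_mul, add_zero, affineX, zero_div, hB₀, hB₁, mul_zero,
    sub_zero, mul_div_cancel_left₀ _ hh₀] at h₀ h₁ h₂ h₃
  refine ⟨(mul_eq_zero.1 h₀).resolve_left hJ, (mul_eq_zero.1 h₁).resolve_left hJ, ?_, ?_⟩
  · rw [h₂, coeff.eq_1 2 B]
    field_simp
  · rw [h₃, coeff.eq_1 2 B, coeff.eq_1 3 B]
    ring

theorem IsAdmissible.eventually_rescaling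
    (hadm : IsAdmissible (affineX (fun _ => 0) h) (affineX τ fun _ => 0))
    (hB : AnalyticAt ℝ B 0) (hB₀ : coeff 0 B =ᶠ[𝓝 0] 0) (hB₁ : coeff 1 B =ᶠ[𝓝 0] 0) :
    ∀ᶠ q : ℝ × ℝ in 𝓝 0, HasPullbackCoeffs B (affineX (fun _ => 0) h) (affineX τ fun _ => 0) q ∧
      coeff 0 B (h q.2 * q.1, τ q.2) = 0 ∧ coeff 1 B (h q.2 * q.1, τ q.2) = 0 := by
  have hmap := (hadm.analyticAt_f.continuousAt.prodMk hadm.analyticAt_k.continuousAt).tendsto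
  simp only [hadm.map_pair] at hmap
  filter_upwards [hadm.eventually_hasPullbackCoeffs hB, hmap.eventually hB₀, hmap.eventually hB₁]
    with q hq h₀ h₁
  simp only [affineX, zero_add, zero_mul, add_zero] at h₀ h₁
  exact ⟨hq, h₀, h₁⟩

theorem coeff_rescale_axis (hB : AnalyticAt ℝ B (0, τ Y, 0))
    (hB' : AnalyticAt ℝ (rescale B h τ) (0, Y, 0)) (hhY : h Y ≠ 0) (hτY : deriv τ Y ≠ 0)
    (hcoeff_two : ∀ᶠ X in 𝓝 0, h Y * deriv τ Y * coeff 2 (rescale B h τ) (X, Y) =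
      h Y * deriv τ Y ^ 2 * coeff 2 B (h Y * X, τ Y) - deriv (deriv τ) Y * h Y +
        2 * deriv τ Y * deriv h Y)
    (hcoeff_three : ∀ᶠ X in 𝓝 0, h Y * deriv τ Y * coeff 3 (rescale B h τ) (X, Y) =
      deriv τ Y ^ 2 * deriv h Y * (X * coeff 2 B (h Y * X, τ Y)) +
        deriv τ Y ^ 3 * coeff 3 B (h Y * X, τ Y) +
        (deriv τ Y * deriv (deriv h) Y - deriv (deriv τ) Y * deriv h Y) * X)
    (hτ_ode : deriv (deriv τ) Y =
      deriv τ Y ^ 2 * coeff 2 B (0, τ Y) + 2 * deriv τ Y * deriv h Y / h Y)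
    (hh_ode : deriv (deriv h) Y =
      2 * deriv h Y ^ 2 / h Y - deriv τ Y ^ 2 * h Y * ∂x (coeff 3 B) (0, τ Y))
    (hB₃ : coeff 3 B (0, τ Y) = 0) (hB₂ : ∂x (coeff 2 B) (0, τ Y) = 0) :
    coeff 2 (rescale B h τ) (0, Y) = 0 ∧ coeff 3 (rescale B h τ) (0, Y) = 0 ∧
      ∂x (coeff 2 (rescale B h τ)) (0, Y) = 0 ∧ ∂x (coeff 3 (rescale B h τ)) (0, Y) = 0 := by
  have hJ : h Y * deriv τ Y ≠ 0 := mul_ne_zero hhY hτY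
  have hscale : HasDerivAt (fun X => h Y * X) (h Y) 0 := by
    simpa using (hasDerivAt_id' (0 : ℝ)).const_mul (h Y)
  have hcomp (j : ℕ) := hasDerivAt_comp₂ (k := coeff j B) (X := fun X => h Y * X)
    (Y := fun _ => τ Y) (t := 0) (analyticAt_coeff (by simpa using hB) j) hscale
    (hasDerivAt_const 0 (τ Y))
  have hleft (j : ℕ) := (hasDerivAt_line_x (q := (0, Y)) (analyticAt_coeff hB' j)).const_mul
    (h Y * deriv τ Y)
  have hunique_two := (hleft 2).unique (((((hcomp 2).const_mul _).sub_const _).add_const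
    _).congr_of_eventuallyEq hcoeff_two)
  have hunique_three := (hleft 3).unique ((((((hasDerivAt_id' 0).mul (hcomp 2)).const_mul _).add
    ((hcomp 3).const_mul _)).add ((hasDerivAt_id' 0).const_mul _)).congr_of_eventuallyEq
    hcoeff_three)
  have htwo := hcoeff_two.self_of_nhds
  have hthree := hcoeff_three.self_of_nhds
  simp only [mul_zero, hB₂, hB₃, hτ_ode, hh_ode] at hunique_two hunique_three htwo hthree
  refine ⟨(mul_eq_zero.1 (htwo.trans ?_)).resolve_left hJ,
    (mul_eq_zero.1 (hthree.trans ?_)).resolve_left hJ,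
    (mul_eq_zero.1 (hunique_two.trans ?_)).resolve_left hJ,
    (mul_eq_zero.1 (hunique_three.trans ?_)).resolve_left hJ⟩
  all_goals field_simp
  all_goals ring

theorem IsChainAdapted.eventually_axis_of_coeff_one (hB : IsChainAdapted B)
    (hB₁ : coeff 1 B =ᶠ[𝓝 0] 0) :
    ∀ᶠ Y in 𝓝 0, coeff 3 B (0, Y) = 0 ∧ ∂x (coeff 2 B) (0, Y) = 0 := by
  filter_upwards [hB, eventually_axis (dirDeriv_eventuallyEq hB₁ (0, 1))] with Y hY hY₁
  rw [hY.2, hY₁, Pi.zero_def, dirDeriv_const, mul_zero]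
  exact ⟨hY.1, rfl⟩

theorem isNormal_rescale (hB : AnalyticAt ℝ B 0) (hchain : IsChainAdapted B)
    (hB₀ : coeff 0 B =ᶠ[𝓝 0] 0) (hB₁ : coeff 1 B =ᶠ[𝓝 0] 0) (hτ : AnalyticAt ℝ τ 0)
    (hh : AnalyticAt ℝ h 0) (hτ₀ : τ 0 = 0) (hh₀ : h 0 ≠ 0) (hτ₁ : deriv τ 0 ≠ 0)
    (hode : ∀ᶠ Y in 𝓝 0, deriv (deriv τ) Y =
        deriv τ Y ^ 2 * coeff 2 B (0, τ Y) + 2 * deriv τ Y * deriv h Y / h Y ∧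
      deriv (deriv h) Y =
        2 * deriv h Y ^ 2 / h Y - deriv τ Y ^ 2 * h Y * ∂x (coeff 3 B) (0, τ Y)) :
    IsNormal (rescale B h τ) := by
  have hadm := isAdmissible_rescaling hh hτ hh₀ hτ₀ hτ₁
  have hB' : AnalyticAt ℝ (rescale B h τ) 0 := hadm.analyticAt_pullback hB
  have hτ_tendsto : Tendsto τ (𝓝 0) (𝓝 0) := by simpa only [hτ₀] using hτ.continuousAt.tendsto
  have hregular : ∀ᶠ Y in 𝓝 0, AnalyticAt ℝ h Y ∧ AnalyticAt ℝ τ Y ∧ h Y ≠ 0 ∧ deriv τ Y ≠ 0 :=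
    hh.eventually_analyticAt.and (hτ.eventually_analyticAt.and
      ((hh.continuousAt.eventually_ne hh₀).and (hτ.deriv.continuousAt.eventually_ne hτ₁)))
  have hcoeffs := ((hadm.eventually_rescaling hB hB₀ hB₁).and
    (continuousAt_snd.tendsto.eventually hregular : ∀ᶠ q : ℝ × ℝ in 𝓝 0, _)).mono
    fun q ⟨⟨H, h₀, h₁⟩, hhq, hτq, hh₀q, hτ₁q⟩ => H.rescaling hhq hτq hh₀q hτ₁q h₀ h₁
  refine ⟨hcoeffs.mono fun q hq => hq.1, hcoeffs.mono fun q hq => hq.2.1, ?_⟩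
  filter_upwards [eventually_axis hcoeffs.eventually_nhds, hregular, hode,
    hτ_tendsto.eventually (hchain.eventually_axis_of_coeff_one hB₁),
    hτ_tendsto.eventually (eventually_axis_horizontal hB.eventually_analyticAt),
    eventually_axis_horizontal hB'.eventually_analyticAt]
    with Y hY ⟨_, _, hhY, hτY⟩ hodeY hchainY hBY hB'Y
  have hline := (Continuous.prodMk_left Y).continuousAt.eventually hY
  exact coeff_rescale_axis hBY hB'Y hhY hτY (hline.mono fun X hX => hX.2.2.1)
    (hline.mono fun X hX => hX.2.2.2) hodeY.1 hodeY.2 hchainY.1 hchainY.2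

theorem exists_isPointTransform_isNormal (hB : AnalyticAt ℝ B 0) (hchain : IsChainAdapted B)
    (hB₀ : coeff 0 B =ᶠ[𝓝 0] 0) (hB₁ : coeff 1 B =ᶠ[𝓝 0] 0) :
    ∃ B', IsPointTransform B B' ∧ IsNormal B' := by
  have haxis {b : ℝ × ℝ → ℝ} (hb : AnalyticAt ℝ b ((0 : ℝ), (0 : ℝ))) :
      AnalyticAt ℝ (fun z : ℝ × ℝ × ℝ × ℝ × ℝ => b (0, z.2.1)) (0, 0, 1, 1, 0) :=
    AnalyticAt.comp (g := b) (f := fun z : ℝ × ℝ × ℝ × ℝ × ℝ => (0, z.2.1)) hb (by fun_prop)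
  have hF : AnalyticAt ℝ (fun z : ℝ × ℝ × ℝ × ℝ × ℝ => z.2.2.2.1 ^ 2 * coeff 2 B (0, z.2.1) +
      2 * z.2.2.2.1 * z.2.2.2.2 / z.2.2.1) (0, 0, 1, 1, 0) :=
    (AnalyticAt.mul (by fun_prop) (haxis (analyticAt_coeff hB 2))).add
      (AnalyticAt.div (by fun_prop) (by fun_prop) (by simp))
  have hG : AnalyticAt ℝ (fun z : ℝ × ℝ × ℝ × ℝ × ℝ => 2 * z.2.2.2.2 ^ 2 / z.2.2.1 -
      z.2.2.2.1 ^ 2 * z.2.2.1 * ∂x (coeff 3 B) (0, z.2.1)) (0, 0, 1, 1, 0) :=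
    (AnalyticAt.div (by fun_prop) (by fun_prop) (by simp)).sub
      (AnalyticAt.mul (by fun_prop) (haxis (analyticAt_dirDeriv (analyticAt_coeff hB 3) (1, 0))))
  obtain ⟨τ, h, hτ, hh, hτ₀, hh₀, hτ₁, -, hode⟩ := exists_analyticAt_deriv_deriv_eq_pair hF hG
  have hh₀' := hh₀.trans_ne one_ne_zero
  have hτ₁' := hτ₁.trans_ne one_ne_zero
  exact ⟨_, (isAdmissible_rescaling hh hτ hh₀' hτ₀ hτ₁').isPointTransform,
    isNormal_rescale hB hchain hB₀ hB₁ hτ hh hτ₀ hh₀' hτ₁' hode⟩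

end Rescaling

section ChainAdaptation

variable {B : ℝ × ℝ × ℝ → ℝ} {g s : ℝ → ℝ} {q : ℝ × ℝ} {Y : ℝ}

/-- The second derivative `g''` for which the curve `x = g(y)` with directions `s(y)` satisfies the
first chain condition, at a point where `g' = v` and `pⁱ` has the coefficient `b i`. -/
def chainCurvature (b : ℕ → ℝ) (s v : ℝ) : ℝ :=
  -(v ^ 3 * b 0 + v ^ 2 * (1 - v * s) * b 1 + v * (1 - v * s) ^ 2 * b 2 + (1 - v * s) ^ 3 * b 3)

/-- The value on the axis of the coefficient of `p` in the straightened equation, at a point where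
`g' = v` and `s' = w`. -/
noncomputable def chainCoeffOne (b : ℕ → ℝ) (s v w : ℝ) : ℝ :=
  (3 * v * b 0 + (1 - v * s) * b 1 - 2 * w) / (1 - v * s)

/-- The value on the axis of the coefficient of `p²` in the straightened equation, at a point where
`g' = v` and `s' = w`. -/
noncomputable def chainCoeffTwo (b : ℕ → ℝ) (s v w : ℝ) : ℝ :=
  (3 * v ^ 2 * b 0 + 2 * v * (1 - v * s) * b 1 + (1 - v * s) ^ 2 * b 2 - 2 * w * v +
    s * chainCurvature b s v) / (1 - v * s)

/-- The second derivative `s''` for which the curve `x = g(y)` with directions `s(y)` satisfies the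
second chain condition. Here `bX i` and `bY i` are the derivatives of the coefficients `b i` across
and along the curve. -/
noncomputable def chainTwist (b bX bY : ℕ → ℝ) (s v w : ℝ) : ℝ :=
  (2 * (3 * chainCurvature b s v * b 0 + 3 * v * bY 0 + (1 - v * s) * bY 1 +
      (chainCurvature b s v * s + v * w) * (chainCoeffOne b s v w - b 1)) -
    (3 * v ^ 2 * bX 0 + 2 * v * (w * b 1 + (1 - v * s) * bX 1) + 2 * (1 - v * s) * w * b 2 +
      (1 - v * s) ^ 2 * bX 2 - w * chainCoeffTwo b s v w)) / 3

theorem eq_of_chainTwist {b bX bY : ℕ → ℝ} {s v w a₁ a₂ a₁_y a₂_x : ℝ} (hJ : 1 - v * s ≠ 0)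
    (ha₁ : (1 - v * s) * a₁ = 3 * v * b 0 + (1 - v * s) * b 1 - 2 * w)
    (ha₂ : (1 - v * s) * a₂ = 3 * v ^ 2 * b 0 + 2 * v * (1 - v * s) * b 1 +
      (1 - v * s) ^ 2 * b 2 - 2 * w * v + s * chainCurvature b s v)
    (ha₁_y : (1 - v * s) * a₁_y = 3 * chainCurvature b s v * b 0 + 3 * v * bY 0 +
      (1 - v * s) * bY 1 - 2 * chainTwist b bX bY s v w +
        (chainCurvature b s v * s + v * w) * (a₁ - b 1))
    (ha₂_x : (1 - v * s) * a₂_x = 3 * v ^ 2 * bX 0 +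
      2 * v * (w * b 1 + (1 - v * s) * bX 1) + 2 * (1 - v * s) * w * b 2 +
        (1 - v * s) ^ 2 * bX 2 - chainTwist b bX bY s v w - w * a₂) :
    a₂_x = 2 * a₁_y := by
  have hone : a₁ = chainCoeffOne b s v w := eq_div_of_mul_eq hJ (by rw [mul_comm, ha₁])
  have htwo : a₂ = chainCoeffTwo b s v w := eq_div_of_mul_eq hJ (by rw [mul_comm, ha₂])
  refine mul_left_cancel₀ hJ ?_
  rw [chainTwist] at ha₁_y ha₂_x
  rw [hone] at ha₁_y
  rw [htwo] at ha₂_x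
  linear_combination ha₂_x - 2 * ha₁_y

section Analytic

variable {E : Type*} [NormedAddCommGroup E] [NormedSpace ℝ E] {b bX bY : ℕ → E → ℝ}
  {s v w : E → ℝ} {z : E}

theorem analyticAt_chainCurvature (hb : ∀ j, AnalyticAt ℝ (b j) z) (hs : AnalyticAt ℝ s z)
    (hv : AnalyticAt ℝ v z) :
    AnalyticAt ℝ (fun z => chainCurvature (fun j => b j z) (s z) (v z)) z := by
  simp only [chainCurvature]
  fun_prop

theorem analyticAt_chainTwist (hb : ∀ j, AnalyticAt ℝ (b j) z) (hbX : ∀ j, AnalyticAt ℝ (bX j) z)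
    (hbY : ∀ j, AnalyticAt ℝ (bY j) z) (hs : AnalyticAt ℝ s z) (hv : AnalyticAt ℝ v z)
    (hw : AnalyticAt ℝ w z) (hJ : 1 - v z * s z ≠ 0) :
    AnalyticAt ℝ (fun z => chainTwist (fun j => b j z) (fun j => bX j z) (fun j => bY j z) (s z)
      (v z) (w z)) z := by
  have hcurvature := analyticAt_chainCurvature hb hs hv
  have hone : AnalyticAt ℝ (fun z => chainCoeffOne (fun j => b j z) (s z) (v z) (w z)) z := by
    simp only [chainCoeffOne]
    fun_prop (disch := exact hJ)
  have htwo : AnalyticAt ℝ (fun z => chainCoeffTwo (fun j => b j z) (s z) (v z) (w z)) z := by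
    simp only [chainCoeffTwo]
    fun_prop (disch := exact hJ)
  simp only [chainTwist]
  fun_prop (disch := norm_num)

end Analytic

/-- The equation obtained from `y'' = B(x, y, y')` by straightening the curve `x = g(y)` with
directions `s(y)` to the axis with horizontal directions. -/
noncomputable def straighten (B : ℝ × ℝ × ℝ → ℝ) (g s : ℝ → ℝ) : ℝ × ℝ × ℝ → ℝ :=
  pullback B (affineX g fun _ => 1) (affineX (fun y => y) s)

theorem isAdmissible_straightening (hg : AnalyticAt ℝ g 0) (hs : AnalyticAt ℝ s 0) (hg₀ : g 0 = 0)
    (hs₀ : s 0 = 0) : IsAdmissible (affineX g fun _ => 1) (affineX (fun y => y) s) where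
  analyticAt_f := analyticAt_affineX hg analyticAt_const
  analyticAt_k := analyticAt_affineX analyticAt_id hs
  map_f := by simp [affineX, hg₀]
  map_k := by simp [affineX]
  partial_x_f := (affineX_partials (q := 0) hg analyticAt_const).1.trans_ne one_ne_zero
  partial_x_k := (affineX_partials (q := 0) analyticAt_id hs).1.trans hs₀
  partial_y_k := by simp [(affineX_partials (q := 0) (α := fun y => y) analyticAt_id hs).2.1]

theorem HasPullbackCoeffs.straightening
    (H : HasPullbackCoeffs B (affineX g fun _ => 1) (affineX (fun y => y) s) q)
    (hg : AnalyticAt ℝ g q.2) (hs : AnalyticAt ℝ s q.2) {b : ℕ → ℝ} {J : ℝ}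
    (hb : b = fun j => pCoeff j B (g q.2 + q.1, q.2 + s q.2 * q.1, s q.2))
    (hJ : J = 1 + deriv s q.2 * q.1 - deriv g q.2 * s q.2) :
    J * coeff 1 (straighten B g s) q = 3 * deriv g q.2 * b 0 + J * b 1 - 2 * deriv s q.2 ∧
      J * coeff 2 (straighten B g s) q = 3 * deriv g q.2 ^ 2 * b 0 + 2 * deriv g q.2 * J * b 1 +
        J ^ 2 * b 2 - 2 * deriv s q.2 * deriv g q.2 - deriv (deriv s) q.2 * q.1 +
        s q.2 * deriv (deriv g) q.2 ∧
      J * coeff 3 (straighten B g s) q = deriv g q.2 ^ 3 * b 0 + deriv g q.2 ^ 2 * J * b 1 +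
        deriv g q.2 * J ^ 2 * b 2 + J ^ 3 * b 3 - deriv (deriv s) q.2 * q.1 * deriv g q.2 +
        (1 + deriv s q.2 * q.1) * deriv (deriv g) q.2 := by
  obtain ⟨-, h₁, h₂, h₃⟩ := H
  obtain ⟨hf_x, hf_y, hf_xx, hf_xy, hf_yy⟩ := affineX_partials (q := q) (β := fun _ => 1) hg
    analyticAt_const
  obtain ⟨hk_x, hk_y, hk_xx, hk_xy, hk_yy⟩ := affineX_partials (q := q) (α := fun y => y)
    analyticAt_id hs
  have hjac : jacobian (affineX g fun _ => 1) (affineX (fun y => y) s) q = J := by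
    rw [jacobian, hf_x, hf_y, hk_x, hk_y, deriv_id'', deriv_const', hJ]
    ring
  simp only [hjac, hf_x, hf_y, hf_xx, hf_xy, hf_yy, hk_x, hk_y, hk_xx, hk_xy, hk_yy, deriv_id'',
    deriv_const', zero_mul, zero_add, add_zero, div_one, affineX, one_mul] at h₁ h₂ h₃
  simp only [straighten, hb, pCoeff_zero]
  exact ⟨by linear_combination h₁, by linear_combination h₂, by linear_combination h₃⟩

theorem straighten_partial_y (hB : AnalyticAt ℝ B (g Y, Y, s Y))
    (hB' : AnalyticAt ℝ (straighten B g s) (0, Y, 0)) (hg : AnalyticAt ℝ g Y)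
    (hs : AnalyticAt ℝ s Y) {b bY : ℕ → ℝ} (hb : b = fun j => pCoeff j B (g Y, Y, s Y))
    (hbY : bY = fun j => dirDeriv (deriv g Y, 1, deriv s Y) (pCoeff j B) (g Y, Y, s Y))
    (H : ∀ᶠ t in 𝓝 Y, (1 - deriv g t * s t) * coeff 1 (straighten B g s) (0, t) =
      3 * deriv g t * pCoeff 0 B (g t, t, s t) +
        (1 - deriv g t * s t) * pCoeff 1 B (g t, t, s t) - 2 * deriv s t) :
    (1 - deriv g Y * s Y) * ∂y (coeff 1 (straighten B g s)) (0, Y) =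
      3 * deriv (deriv g) Y * b 0 + 3 * deriv g Y * bY 0 + (1 - deriv g Y * s Y) * bY 1 -
        2 * deriv (deriv s) Y + (deriv (deriv g) Y * s Y + deriv g Y * deriv s Y) *
          (coeff 1 (straighten B g s) (0, Y) - b 1) := by
  have hs' := hs.differentiableAt.hasDerivAt
  have hg' := hg.deriv.differentiableAt.hasDerivAt
  have hJ := (hg'.mul hs').const_sub 1
  have hcomp (j : ℕ) := hasDerivAt_comp_dirDeriv (γ := fun t => (g t, t, s t))
    (analyticAt_pCoeff hB j) (hg.differentiableAt.hasDerivAt.prodMk ((hasDerivAt_id' Y).prodMk hs'))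
  have hleft := hJ.mul (hasDerivAt_line_y (q := (0, Y)) (analyticAt_coeff hB' 1))
  have hright := (((hg'.const_mul 3).mul (hcomp 0)).add (hJ.mul (hcomp 1))).sub
    (hs.deriv.differentiableAt.hasDerivAt.const_mul 2)
  have hunique := hleft.unique (hright.congr_of_eventuallyEq H)
  simp only [hb, hbY, Pi.mul_apply] at hunique ⊢
  linear_combination hunique

theorem straighten_partial_x (hB : AnalyticAt ℝ B (g Y, Y, s Y))
    (hB' : AnalyticAt ℝ (straighten B g s) (0, Y, 0)) {b bX : ℕ → ℝ}
    (hb : b = fun j => pCoeff j B (g Y, Y, s Y))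
    (hbX : bX = fun j => dirDeriv (1, s Y, 0) (pCoeff j B) (g Y, Y, s Y))
    (H : ∀ᶠ t in 𝓝 0, (1 + deriv s Y * t - deriv g Y * s Y) *
        coeff 2 (straighten B g s) (t, Y) =
      3 * deriv g Y ^ 2 * pCoeff 0 B (g Y + t, Y + s Y * t, s Y) +
        2 * deriv g Y * (1 + deriv s Y * t - deriv g Y * s Y) *
          pCoeff 1 B (g Y + t, Y + s Y * t, s Y) +
        (1 + deriv s Y * t - deriv g Y * s Y) ^ 2 * pCoeff 2 B (g Y + t, Y + s Y * t, s Y) -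
        2 * deriv s Y * deriv g Y - deriv (deriv s) Y * t + s Y * deriv (deriv g) Y) :
    (1 - deriv g Y * s Y) * ∂x (coeff 2 (straighten B g s)) (0, Y) =
      3 * deriv g Y ^ 2 * bX 0 +
        2 * deriv g Y * (deriv s Y * b 1 + (1 - deriv g Y * s Y) * bX 1) +
        2 * (1 - deriv g Y * s Y) * deriv s Y * b 2 + (1 - deriv g Y * s Y) ^ 2 * bX 2 -
        deriv (deriv s) Y - deriv s Y * coeff 2 (straighten B g s) (0, Y) := by
  have hJ := (hasDerivAt_affine 1 (deriv s Y) 0).sub_const (deriv g Y * s Y)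
  have hline : HasDerivAt (fun t => (g Y + t, Y + s Y * t, s Y)) (1, s Y, 0) 0 :=
    ((hasDerivAt_id' (0 : ℝ)).const_add (g Y)).prodMk
      ((hasDerivAt_affine Y (s Y) 0).prodMk (hasDerivAt_const 0 (s Y)))
  have hcomp (j : ℕ) := hasDerivAt_comp_dirDeriv
    (analyticAt_pCoeff (by simpa only [mul_zero, add_zero] using hB) j) hline
  have hleft := hJ.mul (hasDerivAt_line_x (q := (0, Y)) (analyticAt_coeff hB' 2))
  have hright := ((((((hcomp 0).const_mul (3 * deriv g Y ^ 2)).add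
    ((hJ.const_mul (2 * deriv g Y)).mul (hcomp 1))).add ((hJ.pow 2).mul (hcomp 2))).sub_const
    (2 * deriv s Y * deriv g Y)).sub ((hasDerivAt_id' 0).const_mul (deriv (deriv s) Y))).add_const
    (s Y * deriv (deriv g) Y)
  have hunique := hleft.unique (hright.congr_of_eventuallyEq H)
  simp only [mul_zero, add_zero, Pi.pow_apply] at hunique
  simp only [hb, hbX]
  linear_combination hunique

theorem straighten_axis (hB : AnalyticAt ℝ B (g Y, Y, s Y))
    (hB' : AnalyticAt ℝ (straighten B g s) (0, Y, 0)) (hg : AnalyticAt ℝ g Y)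
    (hs : AnalyticAt ℝ s Y) (hJ : 1 - deriv g Y * s Y ≠ 0) {b bX bY : ℕ → ℝ}
    (hb : b = fun j => pCoeff j B (g Y, Y, s Y))
    (hbX : bX = fun j => dirDeriv (1, s Y, 0) (pCoeff j B) (g Y, Y, s Y))
    (hbY : bY = fun j => dirDeriv (deriv g Y, 1, deriv s Y) (pCoeff j B) (g Y, Y, s Y))
    (H : ∀ᶠ q in 𝓝 (0, Y), HasPullbackCoeffs B (affineX g fun _ => 1) (affineX (fun y => y) s) q)
    (hg_ode : deriv (deriv g) Y = chainCurvature b (s Y) (deriv g Y))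
    (hs_ode : deriv (deriv s) Y = chainTwist b bX bY (s Y) (deriv g Y) (deriv s Y)) :
    coeff 3 (straighten B g s) (0, Y) = 0 ∧
      ∂x (coeff 2 (straighten B g s)) (0, Y) = 2 * ∂y (coeff 1 (straighten B g s)) (0, Y) := by
  have H' := ((H.and (eventually_analyticAt_snd (q := (0, Y)) hg)).and
    (eventually_analyticAt_snd (q := (0, Y)) hs)).mono
    fun q ⟨⟨hq, hgq⟩, hsq⟩ => hq.straightening hgq hsq rfl rfl
  have hy := straighten_partial_y hB hB' hg hs hb hbY <|
    ((Continuous.prodMk_right (0 : ℝ)).continuousAt.eventually H').mono fun t ht => by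
      simpa using ht.1
  have hx := straighten_partial_x hB hB' hb hbX <|
    ((Continuous.prodMk_left Y).continuousAt.eventually H').mono fun t ht => ht.2.1
  obtain ⟨h₁, h₂, h₃⟩ := H'.self_of_nhds
  have hb' (j : ℕ) : pCoeff j B (g Y, Y, s Y) = b j := by rw [hb]
  simp only [mul_zero, add_zero, zero_mul, sub_zero, hb'] at h₁ h₂ h₃
  rw [hg_ode] at h₂ h₃
  rw [hg_ode, hs_ode] at hy
  rw [hs_ode] at hx
  refine ⟨(mul_eq_zero.1 (h₃.trans ?_)).resolve_left hJ, eq_of_chainTwist hJ h₁ h₂ hy hx⟩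
  rw [chainCurvature]
  ring

theorem isChainAdapted_straighten (hB : AnalyticAt ℝ B 0) (hg : AnalyticAt ℝ g 0)
    (hs : AnalyticAt ℝ s 0) (hg₀ : g 0 = 0) (hs₀ : s 0 = 0)
    (hode : ∀ᶠ Y in 𝓝 0, deriv (deriv g) Y =
        chainCurvature (fun j => pCoeff j B (g Y, Y, s Y)) (s Y) (deriv g Y) ∧
      deriv (deriv s) Y = chainTwist (fun j => pCoeff j B (g Y, Y, s Y))
        (fun j => dirDeriv (1, s Y, 0) (pCoeff j B) (g Y, Y, s Y))
        (fun j => dirDeriv (deriv g Y, 1, deriv s Y) (pCoeff j B) (g Y, Y, s Y))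
        (s Y) (deriv g Y) (deriv s Y)) :
    IsChainAdapted (straighten B g s) := by
  have hadm := isAdmissible_straightening hg hs hg₀ hs₀
  have hB' : AnalyticAt ℝ (straighten B g s) 0 := hadm.analyticAt_pullback hB
  have hcurve : Tendsto (fun Y => (g Y, Y, s Y)) (𝓝 0) (𝓝 0) := by
    have := hg.continuousAt.prodMk (continuousAt_id.prodMk hs.continuousAt)
    simpa only [ContinuousAt, id_eq, hg₀, hs₀, Prod.mk_zero_zero] using this
  have hJ : ∀ᶠ Y in 𝓝 0, 1 - deriv g Y * s Y ≠ 0 :=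
    (continuousAt_const.sub (hg.deriv.continuousAt.mul hs.continuousAt)).eventually_ne
      (by simp [hs₀])
  filter_upwards [hode, hJ, hcurve.eventually hB.eventually_analyticAt,
    eventually_axis_horizontal hB'.eventually_analyticAt, hg.eventually_analyticAt,
    hs.eventually_analyticAt,
    eventually_axis (hadm.eventually_hasPullbackCoeffs hB).eventually_nhds]
    with Y hodeY hJY hBY hB'Y hgY hsY H
  exact straighten_axis hBY hB'Y hgY hsY hJY rfl rfl rfl H hodeY.1 hodeY.2

theorem exists_isPointTransform_isChainAdapted (hB : AnalyticAt ℝ B 0) :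
    ∃ B', IsPointTransform B B' ∧ IsChainAdapted B' := by
  let p (z : ℝ × ℝ × ℝ × ℝ × ℝ) : ℝ × ℝ × ℝ := (z.2.1, z.1, z.2.2.1)
  have hp : AnalyticAt ℝ p 0 := by fun_prop
  have hb (j : ℕ) : AnalyticAt ℝ (fun z => pCoeff j B (p z)) 0 :=
    AnalyticAt.comp (g := pCoeff j B) (f := p) (analyticAt_pCoeff hB j) hp
  have hdir {v : ℝ × ℝ × ℝ × ℝ × ℝ → ℝ × ℝ × ℝ} (hv : AnalyticAt ℝ v 0) (j : ℕ) :
      AnalyticAt ℝ (fun z => dirDeriv (v z) (pCoeff j B) (p z)) 0 :=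
    AnalyticAt.comp₂ ((ContinuousLinearMap.id ℝ (ℝ × ℝ × ℝ →L[ℝ] ℝ)).analyticAt_bilinear _)
      (AnalyticAt.comp (g := fderiv ℝ (pCoeff j B)) (f := p) (analyticAt_pCoeff hB j).fderiv hp) hv
  obtain ⟨g, s, hg, hs, hg₀, hs₀, -, -, hode⟩ := exists_analyticAt_deriv_deriv_eq_pair
    (a := 0) (b := 0) (c := 0) (d := 0)
    (analyticAt_chainCurvature hb (s := fun z => z.2.2.1) (v := fun z => z.2.2.2.1)
      (by fun_prop) (by fun_prop))
    (analyticAt_chainTwist hb (hdir (v := fun z => (1, z.2.2.1, 0)) (by fun_prop))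
      (hdir (v := fun z => (z.2.2.2.1, 1, z.2.2.2.2)) (by fun_prop)) (s := fun z => z.2.2.1)
      (v := fun z => z.2.2.2.1) (w := fun z => z.2.2.2.2) (by fun_prop) (by fun_prop)
      (by fun_prop) (by simp))
  exact ⟨_, (isAdmissible_straightening hg hs hg₀ hs₀).isPointTransform,
    isChainAdapted_straighten hB hg hs hg₀ hs₀ hode⟩

end ChainAdaptation

section Normalization

variable {B B' : ℝ × ℝ × ℝ → ℝ} {x Y : ℝ}

theorem IsNormal.congr (h : IsNormal B) (hB : B =ᶠ[𝓝 0] B') : IsNormal B' where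
  coeff_zero := (coeff_eventuallyEq hB 0).symm.trans h.coeff_zero
  coeff_one := (coeff_eventuallyEq hB 1).symm.trans h.coeff_one
  axis := by
    have hcoeff (j : ℕ) := eventually_axis (coeff_eventuallyEq hB j)
    have hpartial (j : ℕ) :=
      eventually_axis (dirDeriv_eventuallyEq (coeff_eventuallyEq hB j) (1, 0))
    filter_upwards [h.axis, hcoeff 2, hcoeff 3, hpartial 2, hpartial 3] with Y hY h₂ h₃ h₂x h₃x
    rwa [← h₂, ← h₃, ← h₂x, ← h₃x]

theorem exists_isAdmissible_isNormal (hB : AnalyticAt ℝ B 0) :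
    ∃ f k, IsAdmissible f k ∧ IsNormal (pullback B f k) := by
  obtain ⟨B₁, h₁, hchain₁⟩ := exists_isPointTransform_isChainAdapted hB
  have hB₁ := h₁.analyticAt hB
  obtain ⟨B₂, h₂, hchain₂, hzero₂⟩ := exists_isPointTransform_coeff_zero hB₁ hchain₁
  have hB₂ := h₂.analyticAt hB₁
  obtain ⟨B₃, h₃, hchain₃, hzero₃, hone₃⟩ := exists_isPointTransform_coeff_one hB₂ hchain₂ hzero₂
  have hB₃ := h₃.analyticAt hB₂
  obtain ⟨B₄, h₄, hnormal⟩ := exists_isPointTransform_isNormal hB₃ hchain₃ hzero₃ hone₃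
  obtain ⟨f, k, hfk, hB₄⟩ := ((h₁.trans h₂).trans h₃).trans h₄
  exact ⟨f, k, hfk, hnormal.congr hB₄⟩

theorem iteratedDeriv_slice_eventuallyEq (hB : AnalyticAt ℝ B (x, Y, 0)) (j : ℕ) :
    (fun X => iteratedDeriv j (fun P => B (X, Y, P)) 0) =ᶠ[𝓝 x]
      fun X => j.factorial * coeff j B (X, Y) := by
  have hline : ContinuousAt (fun X : ℝ => (X, Y, (0 : ℝ))) x := by fun_prop
  filter_upwards [hline.eventually hB.eventually_analyticAt] with X hX
  exact iteratedDeriv_slice hX j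

theorem deriv_iteratedDeriv_slice (hB : AnalyticAt ℝ B (x, Y, 0)) (j : ℕ) :
    deriv (fun X => iteratedDeriv j (fun P => B (X, Y, P)) 0) x =
      j.factorial * ∂x (coeff j B) (x, Y) := by
  rw [(iteratedDeriv_slice_eventuallyEq hB j).deriv_eq]
  exact ((hasDerivAt_line_x (analyticAt_coeff (q := (x, Y)) hB j)).const_mul _).deriv

theorem iteratedDeriv_iteratedDeriv_slice_eq_zero (hB : AnalyticAt ℝ B (x, Y, 0)) {j : ℕ}
    (h : coeff j B =ᶠ[𝓝 (x, Y)] 0) (i : ℕ) :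
    iteratedDeriv i (fun X => iteratedDeriv j (fun P => B (X, Y, P)) 0) x = 0 := by
  have hzero : (fun X => iteratedDeriv j (fun P => B (X, Y, P)) 0) =ᶠ[𝓝 x] fun _ => 0 := by
    filter_upwards [iteratedDeriv_slice_eventuallyEq hB j,
      (Continuous.prodMk_left Y).continuousAt.eventually h] with X hX hcoeff
    rw [hX, hcoeff, Pi.zero_apply, mul_zero]
  rw [hzero.iteratedDeriv_eq]
  simp

theorem IsNormal.eventually_taylor (h : IsNormal B) (hB : AnalyticAt ℝ B 0) :
    ∀ᶠ Y in 𝓝 0,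
      (∀ i : ℕ, iteratedDeriv i (fun X => B (X, Y, 0)) 0 = 0 ∧
        iteratedDeriv i (fun X => deriv (fun P => B (X, Y, P)) 0) 0 = 0) ∧
      iteratedDeriv 2 (fun P => B (0, Y, P)) 0 = 0 ∧
      iteratedDeriv 3 (fun P => B (0, Y, P)) 0 = 0 ∧
      deriv (fun X => iteratedDeriv 2 (fun P => B (X, Y, P)) 0) 0 = 0 ∧
      deriv (fun X => iteratedDeriv 3 (fun P => B (X, Y, P)) 0) 0 = 0 := by
  filter_upwards [eventually_axis h.coeff_zero.eventually_nhds,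
    eventually_axis h.coeff_one.eventually_nhds, h.axis,
    eventually_axis_horizontal hB.eventually_analyticAt] with Y hzero hone ⟨h₂, h₃, h₂x, h₃x⟩ hBY
  refine ⟨fun i => ⟨?_, ?_⟩, ?_, ?_, ?_, ?_⟩
  · simpa only [iteratedDeriv_zero] using iteratedDeriv_iteratedDeriv_slice_eq_zero hBY hzero i
  · simpa only [iteratedDeriv_one] using iteratedDeriv_iteratedDeriv_slice_eq_zero hBY hone i
  · rw [iteratedDeriv_slice hBY]
    exact mul_eq_zero_of_right _ h₂
  · rw [iteratedDeriv_slice hBY]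
    exact mul_eq_zero_of_right _ h₃
  · rw [deriv_iteratedDeriv_slice hBY, h₂x, mul_zero]
  · rw [deriv_iteratedDeriv_slice hBY, h₃x, mul_zero]

end Normalization

section Chart

variable {f k : ℝ × ℝ → ℝ} {q : ℝ × ℝ} {e : OpenPartialHomeomorph (ℝ × ℝ) (ℝ × ℝ)}

theorem exists_fderiv_eq_continuousLinearEquiv (hf : AnalyticAt ℝ f q) (hk : AnalyticAt ℝ k q)
    (hJ : jacobian f k q ≠ 0) :
    ∃ L : (ℝ × ℝ) ≃L[ℝ] ℝ × ℝ, fderiv ℝ (fun q => (f q, k q)) q = L := by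
  have hinj : Function.Injective ((fderiv ℝ f q).prod (fderiv ℝ k q)) := by
    refine (injective_iff_map_eq_zero _).2 fun ⟨u, v⟩ huv => ?_
    obtain ⟨hfuv, hkuv⟩ := Prod.mk.inj huv
    have hfuv : ∂x f q * u + ∂y f q * v = 0 := (dirDeriv_prod f u v q).symm.trans hfuv
    have hkuv : ∂x k q * u + ∂y k q * v = 0 := (dirDeriv_prod k u v q).symm.trans hkuv
    have hu : jacobian f k q * u = 0 := by
      rw [jacobian]
      linear_combination ∂y k q * hfuv - ∂y f q * hkuv
    have hv : jacobian f k q * v = 0 := by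
      rw [jacobian]
      linear_combination ∂x f q * hkuv - ∂x k q * hfuv
    rw [(mul_eq_zero_iff_left hJ).1 hu, (mul_eq_zero_iff_left hJ).1 hv, Prod.mk_zero_zero]
  refine ⟨(LinearEquiv.ofInjectiveEndo _ hinj).toContinuousLinearEquiv, ?_⟩
  rw [hf.differentiableAt.fderiv_prodMk hk.differentiableAt]
  rfl

/-- The homeomorphism `e` is the restriction of `(f, k)` to a neighborhood of the origin on which
`(f, k)` is an analytic diffeomorphism. -/
structure IsAnalyticChart (e : OpenPartialHomeomorph (ℝ × ℝ) (ℝ × ℝ)) (f k : ℝ × ℝ → ℝ) :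
    Prop where
  coe_eq : ⇑e = fun q => (f q, k q)
  zero_mem_source : 0 ∈ e.source
  analyticAt_f : ∀ q ∈ e.source, AnalyticAt ℝ f q
  analyticAt_k : ∀ q ∈ e.source, AnalyticAt ℝ k q
  jacobian_ne_zero : ∀ q ∈ e.source, jacobian f k q ≠ 0

theorem IsAdmissible.exists_isAnalyticChart (h : IsAdmissible f k) :
    ∃ e, IsAnalyticChart e f k := by
  obtain ⟨L, hL⟩ :=
    exists_fderiv_eq_continuousLinearEquiv h.analyticAt_f h.analyticAt_k h.jacobian_ne_zero
  have hstrict := (h.analyticAt_f.prod h.analyticAt_k).hasStrictFDerivAt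
  rw [hL] at hstrict
  have hregular := h.analyticAt_f.eventually_analyticAt.and
    (h.analyticAt_k.eventually_analyticAt.and h.eventually_jacobian_ne_zero)
  let e := (hstrict.toOpenPartialHomeomorph fun q => (f q, k q)).restr
    {q | AnalyticAt ℝ f q ∧ AnalyticAt ℝ k q ∧ jacobian f k q ≠ 0}
  have hsource (q) (hq : q ∈ e.source) :
      AnalyticAt ℝ f q ∧ AnalyticAt ℝ k q ∧ jacobian f k q ≠ 0 :=
    interior_subset (s := {q | AnalyticAt ℝ f q ∧ AnalyticAt ℝ k q ∧ jacobian f k q ≠ 0}) hq.2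
  exact ⟨e, rfl, ⟨hstrict.mem_toOpenPartialHomeomorph_source, mem_interior_iff_mem_nhds.2 hregular⟩,
    fun q hq => (hsource q hq).1, fun q hq => (hsource q hq).2.1, fun q hq => (hsource q hq).2.2⟩

namespace IsAnalyticChart

theorem analyticOnNhd (he : IsAnalyticChart e f k) : AnalyticOnNhd ℝ e e.source := by
  rw [he.coe_eq]
  exact fun q hq => (he.analyticAt_f q hq).prod (he.analyticAt_k q hq)

theorem analyticOnNhd_symm (he : IsAnalyticChart e f k) : AnalyticOnNhd ℝ e.symm e.target := by
  intro p hp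
  have hq := e.map_target hp
  obtain ⟨L, hL⟩ := exists_fderiv_eq_continuousLinearEquiv (he.analyticAt_f _ hq)
    (he.analyticAt_k _ hq) (he.jacobian_ne_zero _ hq)
  exact e.analyticAt_symm (i := L) hp (he.analyticOnNhd _ hq) (by rw [he.coe_eq, hL])

theorem map_zero (he : IsAnalyticChart e f k) (h : IsAdmissible f k) : e 0 = 0 :=
  (congrFun he.coe_eq 0).trans h.map_pair

theorem symm_zero (he : IsAnalyticChart e f k) (h : IsAdmissible f k) : e.symm 0 = 0 := by
  simpa only [he.map_zero h] using e.left_inv he.zero_mem_source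

theorem target_mem_nhds (he : IsAnalyticChart e f k) (h : IsAdmissible f k) : e.target ∈ 𝓝 0 :=
  e.open_target.mem_nhds (he.map_zero h ▸ e.map_source he.zero_mem_source)

theorem apply_symm {p : ℝ × ℝ} (he : IsAnalyticChart e f k) (hp : p ∈ e.target) :
    (f (e.symm p), k (e.symm p)) = p := by
  simpa only [he.coe_eq] using e.right_inv hp

end IsAnalyticChart

end Chart

section Solution

variable {B : ℝ × ℝ × ℝ → ℝ} {f k : ℝ × ℝ → ℝ} {X Y y : ℝ → ℝ} {t X₁ X₂ : ℝ}

theorem HasJet2At.comp (hX : HasJet2At X t X₁ X₂)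
    (hY : ∀ᶠ s in 𝓝 t, DifferentiableAt ℝ Y (X s)) (hY' : DifferentiableAt ℝ (deriv Y) (X t)) :
    HasJet2At (fun s => Y (X s)) t (deriv Y (X t) * X₁)
      (deriv (deriv Y) (X t) * X₁ * X₁ + deriv Y (X t) * X₂) := by
  have hfirst : ∀ᶠ s in 𝓝 t, HasDerivAt (fun s => Y (X s)) (deriv Y (X s) * deriv X s) s := by
    filter_upwards [hY, hX.eventually_differentiableAt] with s hYs hXs
    exact hYs.hasDerivAt.comp s hXs.hasDerivAt
  have hjet := HasJet2At.of_hasDerivAt hfirst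
    ((hY'.hasDerivAt.comp t hX.hasDerivAt).mul hX.hasDerivAt_deriv)
  rwa [hX.deriv_eq] at hjet

theorem deriv_deriv_eq_pullback (hX : HasJet2At X t X₁ X₂) (hX₁ : X₁ ≠ 0)
    (hY : ∀ᶠ s in 𝓝 t, DifferentiableAt ℝ Y (X s)) (hY' : DifferentiableAt ℝ (deriv Y) (X t))
    (hy : HasJet2At y t (deriv y t) (B (t, y t, deriv y t)))
    (hf : AnalyticAt ℝ f (X t, Y (X t))) (hk : AnalyticAt ℝ k (X t, Y (X t)))
    (hJ : jacobian f k (X t, Y (X t)) ≠ 0)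
    (hcurve : ∀ᶠ s in 𝓝 t, (f (X s, Y (X s)), k (X s, Y (X s))) = (s, y s)) :
    deriv (deriv Y) (X t) = pullback B f k (X t, Y (X t), deriv Y (X t)) := by
  have hid : HasJet2At (fun s => s) t 1 0 := by simpa using hasJet2At_affine 0 1 t
  obtain ⟨hft, hkt⟩ := Prod.mk.inj hcurve.self_of_nhds
  have hpullback := pullback_eq_of_hasJet2At (B := B) hX (hX.comp hY hY') hX₁ hf hk hJ
    (hid.congr (hcurve.mono fun _ hs => (Prod.mk.inj hs).1))
    (hy.congr (hcurve.mono fun _ hs => (Prod.mk.inj hs).2)) (by rw [hft, hkt]; simp)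
  rw [mul_div_cancel_right₀ _ hX₁] at hpullback
  refine mul_left_cancel₀ (pow_ne_zero 3 hX₁) ?_
  linear_combination hpullback

theorem IsAnalyticChart.deriv_deriv_eq_pullback {e : OpenPartialHomeomorph (ℝ × ℝ) (ℝ × ℝ)}
    (he : IsAnalyticChart e f k) {I : Set ℝ} (hI : I ∈ 𝓝 t) (hgraph : ∀ s ∈ I, (s, y s) ∈ e.target)
    (hy : ∀ s ∈ I, DifferentiableAt ℝ y s) (hy' : DifferentiableAt ℝ (deriv y) t)
    (hode : deriv (deriv y) t = B (t, y t, deriv y t))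
    (hne : deriv (fun s => (e.symm (s, y s)).1) t ≠ 0)
    (hY : ∀ s ∈ I, DifferentiableAt ℝ Y (e.symm (s, y s)).1)
    (hY' : DifferentiableAt ℝ (deriv Y) (e.symm (t, y t)).1)
    (hYy : ∀ s ∈ I, Y (e.symm (s, y s)).1 = (e.symm (s, y s)).2) :
    deriv (deriv Y) (e.symm (t, y t)).1 =
      pullback B f k ((e.symm (t, y t)).1, Y (e.symm (t, y t)).1, deriv Y (e.symm (t, y t)).1) := by
  have ht := mem_of_mem_nhds hI
  have hpair (s) (hs : s ∈ I) :
      ((e.symm (s, y s)).1, Y (e.symm (s, y s)).1) = e.symm (s, y s) := by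
    rw [hYy s hs]
  have hsource := e.map_target (hgraph t ht)
  have hyjet : HasJet2At y t (deriv y t) (B (t, y t, deriv y t)) :=
    ⟨eventually_of_mem hI hy, rfl, hode ▸ hy'.hasDerivAt⟩
  have hXjet := HasJet2At.comp₂ (k := fun p => (e.symm p).1) (P := deriv y t)
    (hasJet2At_affine 0 1 t) (by simpa using hyjet)
    (analyticAt_fst.comp (he.analyticOnNhd_symm _ (by simpa using hgraph t ht)))
  simp only [zero_add, one_mul] at hXjet
  refine SecondOrderODE.deriv_deriv_eq_pullback hXjet (hXjet.deriv_eq ▸ hne)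
    (eventually_of_mem hI hY) hY' hyjet ?_ ?_ ?_ (eventually_of_mem hI fun s hs => ?_)
  · exact (hpair t ht).symm ▸ he.analyticAt_f _ hsource
  · exact (hpair t ht).symm ▸ he.analyticAt_k _ hsource
  · exact (hpair t ht).symm ▸ he.jacobian_ne_zero _ hsource
  · rw [hpair s hs, he.apply_symm (hgraph s hs)]

end Solution

end SecondOrderODE

open SecondOrderODE

/-- Normal form of a second order ODE `y'' = B(x,y,y')`, `B` real-analytic near
`0`: there is a point transformation `Φ = (φ,ψ)`, a local diffeomorphism
fixing the origin, and an analytic `B*` whose Taylor coefficients `B_{ij}(Y)`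
(of `X^i (Y')^j`) vanish for `j = 0, 1` (all `i`) and for
`(i,j) ∈ {(0,2),(0,3),(1,2),(1,3)}`, such that the ODE transforms into
`Y'' = B*(X,Y,Y')`. -/
theorem stmt6 (B : ℝ × ℝ × ℝ → ℝ) (V : Set (ℝ × ℝ × ℝ))
    (hV : V ∈ nhds (0 : ℝ × ℝ × ℝ)) (hB : AnalyticOnNhd ℝ B V) :
    ∃ (φ ψ : ℝ × ℝ → ℝ) (U : Set (ℝ × ℝ)) (Bs : ℝ × ℝ × ℝ → ℝ)
      (W : Set (ℝ × ℝ × ℝ)),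
      -- Φ = (φ,ψ) is a local diffeomorphism of a neighborhood U of 0,
      -- fixing the origin
      U ∈ nhds (0 : ℝ × ℝ) ∧ φ 0 = 0 ∧ ψ 0 = 0 ∧
      ContDiffOn ℝ ⊤ (fun p => (φ p, ψ p)) U ∧
      InjOn (fun p : ℝ × ℝ => (φ p, ψ p)) U ∧
      IsOpen ((fun p : ℝ × ℝ => (φ p, ψ p)) '' U) ∧
      (∃ Φinv : ℝ × ℝ → ℝ × ℝ,
        ContDiffOn ℝ ⊤ Φinv ((fun p : ℝ × ℝ => (φ p, ψ p)) '' U) ∧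
        ∀ p ∈ U, Φinv (φ p, ψ p) = p) ∧
      -- B* is real-analytic near 0
      W ∈ nhds (0 : ℝ × ℝ × ℝ) ∧ AnalyticOnNhd ℝ Bs W ∧
      -- Taylor coefficient conditions on B*
      (∃ δ : ℝ, 0 < δ ∧ ∀ Yv ∈ Ioo (-δ) δ,
        (∀ i : ℕ,
          iteratedDeriv i (fun Xv => Bs (Xv, Yv, 0)) 0 = 0 ∧
          iteratedDeriv i
            (fun Xv => deriv (fun Pv => Bs (Xv, Yv, Pv)) 0) 0 = 0) ∧
        iteratedDeriv 2 (fun Pv => Bs (0, Yv, Pv)) 0 = 0 ∧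
        iteratedDeriv 3 (fun Pv => Bs (0, Yv, Pv)) 0 = 0 ∧
        deriv (fun Xv => iteratedDeriv 2 (fun Pv => Bs (Xv, Yv, Pv)) 0) 0 = 0 ∧
        deriv (fun Xv => iteratedDeriv 3 (fun Pv => Bs (Xv, Yv, Pv)) 0) 0 = 0) ∧
      -- transformation of solutions: for every solution y of y'' = B(x,y,y')
      -- with graph in U, data in V and (φ(x,y(x)))' ≠ 0, every function Y
      -- with Y(φ(x,y(x))) = ψ(x,y(x)) solves Y'' = B*(X,Y,Y') along the curve
      (∀ (y : ℝ → ℝ) (I : Set ℝ), IsOpen I →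
        (∀ x ∈ I, (x, y x) ∈ U) →
        (∀ x ∈ I, (x, y x, deriv y x) ∈ V) →
        (∀ x ∈ I, DifferentiableAt ℝ y x ∧ DifferentiableAt ℝ (deriv y) x) →
        (∀ x ∈ I, deriv (deriv y) x = B (x, y x, deriv y x)) →
        (∀ x ∈ I, deriv (fun t => φ (t, y t)) x ≠ 0) →
        ∀ Y : ℝ → ℝ,
          (∀ x ∈ I, DifferentiableAt ℝ Y (φ (x, y x)) ∧
            DifferentiableAt ℝ (deriv Y) (φ (x, y x))) →
          (∀ x ∈ I, Y (φ (x, y x)) = ψ (x, y x)) →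
          ∀ x ∈ I,
            deriv (deriv Y) (φ (x, y x)) =
              Bs (φ (x, y x), Y (φ (x, y x)), deriv Y (φ (x, y x)))) := by
  obtain ⟨f, k, hfk, hnormal⟩ := exists_isAdmissible_isNormal (hB 0 (mem_of_mem_nhds hV))
  obtain ⟨e, he⟩ := hfk.exists_isAnalyticChart
  have hBs := hfk.analyticAt_pullback (hB 0 (mem_of_mem_nhds hV))
  obtain ⟨δ, hδ, htaylor⟩ := Metric.eventually_nhds_iff_ball.1 (hnormal.eventually_taylor hBs)
  have himage : (fun p : ℝ × ℝ => ((e.symm p).1, (e.symm p).2)) '' e.target = e.source :=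
    e.symm.image_source_eq_target
  refine ⟨fun p => (e.symm p).1, fun p => (e.symm p).2, e.target, pullback B f k,
    {z | AnalyticAt ℝ (pullback B f k) z}, he.target_mem_nhds hfk,
    congrArg Prod.fst (he.symm_zero hfk), congrArg Prod.snd (he.symm_zero hfk),
    he.analyticOnNhd_symm.contDiffOn_of_completeSpace, e.symm.injOn, himage ▸ e.open_source,
    ⟨e, himage ▸ he.analyticOnNhd.contDiffOn_of_completeSpace, fun p hp => e.right_inv hp⟩,
    hBs.eventually_analyticAt, fun z hz => hz, ⟨δ, hδ, fun Y hY => htaylor Y ?_⟩, ?_⟩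
  · simpa [Real.ball_eq_Ioo] using hY
  · intro y I hI hgraph _ hy hode hne Y hY hYy x hx
    exact he.deriv_deriv_eq_pullback (hI.mem_nhds hx) hgraph (fun t ht => (hy t ht).1)
      (hy x hx).2 (hode x hx) (hne x hx) (fun t ht => (hY t ht).1) (hY x hx).2 hYy
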